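/- arXiv:1211.0414 — 5 statements merged into one kernel-verified Lean document; each statement's English description precedes it below -/
import Mathlib

section
/- Let (H,d) be a Hadamard space and let f : H → (−∞,∞] and f^n : H → (−∞,∞] (n ∈ ℕ) be proper convex lower semicontinuous functions. If f^n → f in the sense of Mosco as n → ∞, then for every λ > 0 and every x ∈ H, the Moreau–Yosida envelopes converge, f^n_λ(x) → f_λ(x), and the resolvents converge strongly, J^n_λ(x) → J_λ(x) in H. -/
open Filter Topology
open scoped Classical

/-- `γ`, restricted to `[0,1]`, is an affinely parametrized geodesic. -/
def IsGeodesic {H : Type*} [MetricSpace H] (γ : ℝ → H) : Prop :=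
  ∀ s ∈ Set.Icc (0:ℝ) 1, ∀ t ∈ Set.Icc (0:ℝ) 1,
    dist (γ s) (γ t) = |s - t| * dist (γ 0) (γ 1)

/-- A Hadamard space: a complete geodesic metric space satisfying the CAT(0) inequality. -/
structure HadamardSpace (H : Type*) [MetricSpace H] [CompleteSpace H] : Prop where
  geodesic : ∀ x y : H, ∃ γ : ℝ → H, IsGeodesic γ ∧ γ 0 = x ∧ γ 1 = y
  cat0 : ∀ (x : H) (γ : ℝ → H), IsGeodesic γ → ∀ t ∈ Set.Icc (0:ℝ) 1,
      dist x (γ t) ^ 2 ≤ (1 - t) * dist x (γ 0) ^ 2 + t * dist x (γ 1) ^ 2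
        - t * (1 - t) * dist (γ 0) (γ 1) ^ 2

/-- A set is (geodesically) convex if it contains every geodesic segment between its points. -/
def GeodesicConvex {H : Type*} [MetricSpace H] (C : Set H) : Prop :=
  ∀ γ : ℝ → H, IsGeodesic γ → γ 0 ∈ C → γ 1 ∈ C → ∀ t ∈ Set.Icc (0:ℝ) 1, γ t ∈ C

/-- A function `f : H → (−∞,∞]` is convex if it is convex along every geodesic. -/
def ConvexFun {H : Type*} [MetricSpace H] (f : H → EReal) : Prop :=
  ∀ γ : ℝ → H, IsGeodesic γ → ∀ t ∈ Set.Icc (0:ℝ) 1,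
    f (γ t) ≤ ((1 - t : ℝ) : EReal) * f (γ 0) + ((t : ℝ) : EReal) * f (γ 1)

/-- `f` is strongly convex with parameter `β > 0`. -/
def StronglyConvexWith {H : Type*} [MetricSpace H] (β : ℝ) (f : H → EReal) : Prop :=
  ∀ γ : ℝ → H, IsGeodesic γ → ∀ t ∈ Set.Icc (0:ℝ) 1,
    f (γ t) ≤ ((1 - t : ℝ) : EReal) * f (γ 0) + ((t : ℝ) : EReal) * f (γ 1)
      - ((β * (t * (1 - t)) * dist (γ 0) (γ 1) ^ 2 : ℝ) : EReal)

/-- `f : H → (−∞,∞]` is proper (not identically `∞`, never `−∞`), convex and lsc. -/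
def ProperConvexLsc {H : Type*} [MetricSpace H] (f : H → EReal) : Prop :=
  (∃ x, f x ≠ ⊤) ∧ (∀ x, f x ≠ ⊥) ∧ ConvexFun f ∧ LowerSemicontinuous f

/-- `c` is an asymptotic center of the (bounded) sequence `x`:
it minimizes `y ↦ limsup_n d(y, x_n)²`. -/
def IsAsymptoticCenter {H : Type*} [MetricSpace H] (x : ℕ → H) (c : H) : Prop :=
  ∀ y : H, limsup (fun n => dist c (x n) ^ 2) atTop ≤ limsup (fun n => dist y (x n) ^ 2) atTop

/-- `x` weakly converges to `c` if `c` is the asymptotic center of every subsequence of `x`. -/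
def WeakConvSeq {H : Type*} [MetricSpace H] (x : ℕ → H) (c : H) : Prop :=
  ∀ φ : ℕ → ℕ, StrictMono φ → IsAsymptoticCenter (x ∘ φ) c

/-- Mosco convergence of `fn` to `f`. -/
def MoscoConv {H : Type*} [MetricSpace H] (fn : ℕ → H → EReal) (f : H → EReal) : Prop :=
  (∀ (x : H) (xs : ℕ → H), Bornology.IsBounded (Set.range xs) → WeakConvSeq xs x →
      f x ≤ liminf (fun n => fn n (xs n)) atTop) ∧
  (∀ x : H, ∃ ys : ℕ → H, Tendsto ys atTop (𝓝 x) ∧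
      Tendsto (fun n => fn n (ys n)) atTop (𝓝 (f x)))

/-- `p` is the resolvent `J_λ x` of `f` at `x`: it minimizes `y ↦ f(y) + d(x,y)²/(2λ)`. -/
def IsResolventPt {H : Type*} [MetricSpace H] (f : H → EReal) (lam : ℝ) (x p : H) : Prop :=
  ∀ y : H, f p + ((dist x p ^ 2 / (2 * lam) : ℝ) : EReal)
    ≤ f y + ((dist x y ^ 2 / (2 * lam) : ℝ) : EReal)

/-- The Moreau–Yosida envelope `f_λ(x) = inf_y [f(y) + d(x,y)²/(2λ)]`. -/
noncomputable def MoreauEnv {H : Type*} [MetricSpace H] (f : H → EReal) (lam : ℝ) (x : H) :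
    EReal :=
  ⨅ y : H, f y + ((dist x y ^ 2 / (2 * lam) : ℝ) : EReal)

/-- `p` is the metric projection of `x` onto `C`. -/
def IsProjPt {H : Type*} [MetricSpace H] (C : Set H) (x p : H) : Prop :=
  p ∈ C ∧ ∀ c ∈ C, dist x p ≤ dist x c

/-- The indicator function of a set, with values in `(−∞,∞]`. -/
noncomputable def indicatorE {H : Type*} (C : Set H) : H → EReal :=
  fun x => if x ∈ C then (0 : EReal) else ⊤

/-- `y = S_t x` is the gradient-flow semigroup value:
the limit of the iterated resolvents `(J_{t/n})^{(n)} x`. -/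
def IsGradientFlowPt {H : Type*} [MetricSpace H] (J : ℝ → H → H) (t : ℝ) (x y : H) : Prop :=
  Tendsto (fun n : ℕ => (J (t / (n : ℝ)))^[n] x) atTop (𝓝 y)

/-! Mosco's second condition, applied to a recovery sequence, bounds the upper limit of the
envelopes by `f_λ(x)`. For the lower limit, the first condition at strongly convergent sequences
and convexity give the `fⁿ` a common minorant with linear growth in `d(x, ·)`, so that
near-minimizers of `fⁿ + d(x, ·)²/(2λ)` stay bounded; along a weakly convergent subsequence one uses
the first condition together with weak lower semicontinuity of `d(x, ·)²`. Once the envelopes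
converge, the quadratic growth `fⁿ_λ(x) + d(Jⁿ_λ x, y)²/(2λ) ≤ fⁿ(y) + d(x, y)²/(2λ)`, taken at a
recovery sequence `yₙ → J_λ x`, forces `d(Jⁿ_λ x, yₙ) → 0`.

Weak sequential compactness comes from passing to a filter whose asymptotic radius no finer filter
can decrease: if its asymptotic center `c` violated Opial's inequality at `y` along some set, then
moving from `c` towards `y` would decrease the radius along that set. -/

theorem tendsto_zero_of_coe_add_le {ι : Type*} {F : Filter ι} {u v : ι → EReal} {d : ι → ℝ}
    {a : ℝ} (hu : Tendsto u F (𝓝 a)) (hv : Tendsto v F (𝓝 a)) (hd : ∀ i, 0 ≤ d i)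
    (h : ∀ i, u i + d i ≤ v i) : Tendsto d F (𝓝 0) := by
  refine tendsto_order.2 ⟨fun b hb => .of_forall fun i => hb.trans_le (hd i), fun ε hε => ?_⟩
  have hlt : ((a - ε / 2 : ℝ) : EReal) < a := EReal.coe_lt_coe_iff.2 (by linarith)
  have hgt : (a : EReal) < (a + ε / 2 : ℝ) := EReal.coe_lt_coe_iff.2 (by linarith)
  filter_upwards [hu.eventually (lt_mem_nhds hlt), hv.eventually (gt_mem_nhds hgt)] with i hui hvi
  have := (EReal.add_lt_add_right_coe hui (d i)).trans_le (h i) |>.trans hvi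
  norm_cast at this
  linarith

/-- A Brézis–Browder ordering principle. -/
theorem exists_le_forall_le_of_monotone {α : Type*} [Preorder α] {r : α → ℝ} (hr : Monotone r)
    (hbdd : BddBelow (Set.range r))
    (hα : ∀ u : ℕ → α, Antitone u → BddBelow (Set.range u)) (a : α) :
    ∃ b ≤ a, ∀ c ≤ b, r b ≤ r c := by
  have hstep : ∀ (k : ℕ) (a : α), ∃ b ≤ a, ∀ c ≤ a, r b ≤ r c + 1 / ((k : ℝ) + 1) := by
    intro k a
    obtain ⟨_, ⟨b, hba, rfl⟩, hb⟩ := Real.lt_sInf_add_pos (s := r '' Set.Iic a)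
      ⟨r a, a, le_rfl, rfl⟩ (Nat.one_div_pos_of_nat (n := k))
    refine ⟨b, hba, fun c hca => hb.le.trans ?_⟩
    gcongr
    exact csInf_le (hbdd.mono (Set.image_subset_range _ _)) ⟨c, hca, rfl⟩
  choose next hnext_le hnext using hstep
  let u : ℕ → α := fun k => Nat.rec a next k
  obtain ⟨b, hb⟩ := hα u (antitone_nat_of_succ_le fun k => hnext_le k (u k))
  have hbu : ∀ k, b ≤ u k := fun k => hb ⟨k, rfl⟩
  refine ⟨b, hbu 0, fun c hcb => ?_⟩
  have hlim : Tendsto (fun k : ℕ => r c + 1 / ((k : ℝ) + 1)) atTop (𝓝 (r c)) := by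
    simpa using (tendsto_one_div_add_atTop_nhds_zero_nat (𝕜 := ℝ)).const_add (r c)
  exact ge_of_tendsto' hlim fun k =>
    (hr (hbu (k + 1))).trans (hnext k (u k) c (hcb.trans (hbu k)))

section AsymptoticRadius

variable {ι H : Type*} [MetricSpace H] {x : ι → H} {F G : Filter ι}

/-- The square of the asymptotic radius of `x` along `F`, that is, of
`inf_y limsup_F d(y, x i)`. It is meaningful for bounded `x` and proper `F`; the infimum is over
eventual upper bounds, which avoids `limsup`. -/
noncomputable def asymptoticRadiusSq (x : ι → H) (F : Filter ι) : ℝ :=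
  sInf {b | ∃ y, ∀ᶠ i in F, dist y (x i) ^ 2 ≤ b}

theorem nonneg_of_eventually_sq_dist_le [F.NeBot] {y : H} {b : ℝ}
    (h : ∀ᶠ i in F, dist y (x i) ^ 2 ≤ b) : 0 ≤ b :=
  let ⟨_, hi⟩ := h.exists
  (sq_nonneg _).trans hi

theorem asymptoticRadiusSq_le [F.NeBot] {y : H} {b : ℝ}
    (h : ∀ᶠ i in F, dist y (x i) ^ 2 ≤ b) : asymptoticRadiusSq x F ≤ b :=
  csInf_le ⟨0, fun _ ⟨_, hb⟩ => nonneg_of_eventually_sq_dist_le hb⟩ ⟨y, h⟩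

theorem asymptoticRadiusSq_nonneg [F.NeBot] : 0 ≤ asymptoticRadiusSq x F :=
  Real.sInf_nonneg fun _ ⟨_, hb⟩ => nonneg_of_eventually_sq_dist_le hb

theorem exists_forall_sq_dist_le (hx : Bornology.IsBounded (Set.range x)) (y : H) :
    ∃ b, ∀ i, dist y (x i) ^ 2 ≤ b := by
  obtain ⟨r, hr⟩ := hx.subset_closedBall y
  refine ⟨r ^ 2, fun i => ?_⟩
  have := Metric.mem_closedBall'.1 (hr ⟨i, rfl⟩)
  gcongr

theorem nonempty_eventually_sq_dist_le [Nonempty H] (hx : Bornology.IsBounded (Set.range x))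
    (F : Filter ι) : {b | ∃ y, ∀ᶠ i in F, dist y (x i) ^ 2 ≤ b}.Nonempty :=
  let y := Classical.arbitrary H
  let ⟨b, hb⟩ := exists_forall_sq_dist_le hx y
  ⟨b, y, .of_forall hb⟩

theorem exists_eventually_sq_dist_le [Nonempty H] (hx : Bornology.IsBounded (Set.range x))
    (F : Filter ι) {ε : ℝ} (hε : 0 < ε) :
    ∃ y, ∀ᶠ i in F, dist y (x i) ^ 2 ≤ asymptoticRadiusSq x F + ε := by
  obtain ⟨b, ⟨y, hy⟩, hb⟩ := Real.lt_sInf_add_pos (nonempty_eventually_sq_dist_le hx F) hε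
  exact ⟨y, hy.mono fun _ h => h.trans hb.le⟩

theorem asymptoticRadiusSq_mono [F.NeBot] (hx : Bornology.IsBounded (Set.range x)) (hFG : F ≤ G) :
    asymptoticRadiusSq x F ≤ asymptoticRadiusSq x G := by
  have : Nonempty H := (nonempty_of_neBot F).map x
  exact le_csInf (nonempty_eventually_sq_dist_le hx G) fun _ ⟨_, hb⟩ =>
    asymptoticRadiusSq_le (hFG hb)

theorem exists_filter_le_forall_asymptoticRadiusSq_le (hx : Bornology.IsBounded (Set.range x))
    (F₀ : Filter ι) [F₀.NeBot] [F₀.IsCountablyGenerated] :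
    ∃ F ≤ F₀, F.NeBot ∧ F.IsCountablyGenerated ∧
      ∀ s, (F ⊓ 𝓟 s).NeBot → asymptoticRadiusSq x F ≤ asymptoticRadiusSq x (F ⊓ 𝓟 s) := by
  let S := {F : Filter ι // F.NeBot ∧ F.IsCountablyGenerated}
  have hmono : Monotone fun F : S => asymptoticRadiusSq x F.1 := fun F _ hFG =>
    have := F.2.1
    asymptoticRadiusSq_mono hx hFG
  have hbdd : BddBelow (Set.range fun F : S => asymptoticRadiusSq x F.1) :=
    ⟨0, by rintro _ ⟨⟨F, _, _⟩, rfl⟩; exact asymptoticRadiusSq_nonneg⟩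
  have hS : ∀ u : ℕ → S, Antitone u → BddBelow (Set.range u) := by
    intro u hu
    have hne : ∀ k, (u k).1.NeBot := fun k => (u k).2.1
    have hcg : ∀ k, (u k).1.IsCountablyGenerated := fun k => (u k).2.2
    have hdir : Directed (· ≥ ·) fun k => (u k).1 := Antitone.directed_ge fun _ _ h => hu h
    refine ⟨⟨⨅ k, (u k).1, iInf_neBot_of_directed' hdir hne, inferInstance⟩, ?_⟩
    rintro _ ⟨k, rfl⟩
    exact iInf_le (fun k => (u k).1) k
  obtain ⟨⟨F, hne, hcg⟩, hF, hmin⟩ := exists_le_forall_le_of_monotone hmono hbdd hS ⟨F₀, ‹_›, ‹_›⟩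
  exact ⟨F, hF, hne, hcg, fun s hs => hmin ⟨F ⊓ 𝓟 s, hs, inferInstance⟩
    (inf_le_left : F ⊓ 𝓟 s ≤ F)⟩

variable [CompleteSpace H]

theorem HadamardSpace.asymptoticRadiusSq_add_sq_dist_le (hH : HadamardSpace H) [F.NeBot] {y z : H}
    {a b : ℝ} (hy : ∀ᶠ i in F, dist y (x i) ^ 2 ≤ a) (hz : ∀ᶠ i in F, dist z (x i) ^ 2 ≤ b) :
    asymptoticRadiusSq x F + dist y z ^ 2 / 4 ≤ (a + b) / 2 := by
  obtain ⟨γ, hγ, rfl, rfl⟩ := hH.geodesic y z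
  have hmid : ∀ᶠ i in F, dist (γ (1 / 2)) (x i) ^ 2 ≤ (a + b) / 2 - dist (γ 0) (γ 1) ^ 2 / 4 := by
    filter_upwards [hy, hz] with i hyi hzi
    have hcat := hH.cat0 (x i) γ hγ (1 / 2) (by norm_num)
    simp only [dist_comm (x i)] at hcat
    linarith
  linarith [asymptoticRadiusSq_le hmid]

theorem HadamardSpace.exists_forall_eventually_sq_dist_le (hH : HadamardSpace H) [F.NeBot]
    (hx : Bornology.IsBounded (Set.range x)) :
    ∃ c, ∀ ε > 0, ∀ᶠ i in F, dist c (x i) ^ 2 ≤ asymptoticRadiusSq x F + ε := by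
  have : Nonempty H := (nonempty_of_neBot F).map x
  set r := asymptoticRadiusSq x F
  choose y hy using fun k : ℕ =>
    exists_eventually_sq_dist_le hx F (Nat.one_div_pos_of_nat (α := ℝ) (n := k))
  have hlim := tendsto_one_div_add_atTop_nhds_zero_nat (𝕜 := ℝ)
  have hdist : ∀ m n N : ℕ, N ≤ m → N ≤ n → dist (y m) (y n) ≤ √(4 * (1 / ((N : ℝ) + 1))) := by
    intro m n N hm hn
    have := hH.asymptoticRadiusSq_add_sq_dist_le (hy m) (hy n)
    have := Nat.one_div_le_one_div (α := ℝ) hm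
    have := Nat.one_div_le_one_div (α := ℝ) hn
    exact Real.le_sqrt_of_sq_le (by linarith)
  have hcauchy : CauchySeq y :=
    cauchySeq_of_le_tendsto_0 _ hdist (by simpa using (hlim.const_mul 4).sqrt)
  obtain ⟨c, hc⟩ := cauchySeq_tendsto_of_complete hcauchy
  refine ⟨c, fun ε hε => ?_⟩
  have hbound : Tendsto (fun k : ℕ => (dist c (y k) + √(r + 1 / ((k : ℝ) + 1))) ^ 2) atTop
      (𝓝 r) := by
    have h := ((tendsto_const_nhds (x := c)).dist hc).add (hlim.const_add r).sqrt |>.pow 2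
    rwa [dist_self, zero_add, add_zero, Real.sq_sqrt asymptoticRadiusSq_nonneg] at h
  obtain ⟨k, hk⟩ := (hbound.eventually (gt_mem_nhds (lt_add_of_pos_right r hε))).exists
  filter_upwards [hy k] with i hi
  calc dist c (x i) ^ 2 ≤ (dist c (y k) + dist (y k) (x i)) ^ 2 := by
        gcongr
        exact dist_triangle _ _ _
    _ ≤ (dist c (y k) + √(r + 1 / ((k : ℝ) + 1))) ^ 2 := by
        gcongr
        exact Real.le_sqrt_of_sq_le hi
    _ ≤ r + ε := hk.le

end AsymptoticRadius

section WeakConvergence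

variable {ι κ H : Type*} [MetricSpace H] {x : ι → H} {F : Filter ι} {c : H}

/-- Weak convergence of `x` to `c` along `F`, expressed by Opial's inequality
`d(c, x i)² + d(c, y)² ≤ d(y, x i)² + o(1)`. In a Hilbert space the inequality says
`⟪x i - c, y - c⟫ ≤ o(1)` for every `y`. In contrast to `WeakConvSeq`, it makes no reference to
subsequences and applies to an arbitrary filter. -/
def WeakTendsto (x : ι → H) (F : Filter ι) (c : H) : Prop :=
  ∀ y, ∀ ε > 0, ∀ᶠ i in F, dist c (x i) ^ 2 + dist c y ^ 2 ≤ dist y (x i) ^ 2 + ε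

theorem WeakTendsto.comp (h : WeakTendsto x F c) {G : Filter κ} {u : κ → ι}
    (hu : Tendsto u G F) : WeakTendsto (x ∘ u) G c :=
  fun y ε hε => hu.eventually (h y ε hε)

theorem WeakTendsto.eventually_sq_dist_le (h : WeakTendsto x F c) (y : H) {ε : ℝ} (hε : 0 < ε) :
    ∀ᶠ i in F, dist y c ^ 2 ≤ dist y (x i) ^ 2 + ε := by
  filter_upwards [h y ε hε] with i hi
  rw [dist_comm y c]
  linarith [sq_nonneg (dist c (x i))]

theorem weakTendsto_of_tendsto (h : Tendsto x F (𝓝 c)) : WeakTendsto x F c := by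
  intro y ε hε
  have hlim : Tendsto (fun i => dist c (x i) ^ 2 + dist c y ^ 2 - dist y (x i) ^ 2) F (𝓝 0) := by
    have := (((tendsto_const_nhds (x := c)).dist h).pow 2).add_const (dist c y ^ 2)
      |>.sub (((tendsto_const_nhds (x := y)).dist h).pow 2)
    simpa [dist_comm y c] using this
  filter_upwards [hlim.eventually (gt_mem_nhds hε)] with i hi
  linarith

theorem WeakTendsto.extend {φ : ι → κ} {G : Filter κ} (h : WeakTendsto x F c)
    (hφ : Function.Injective φ) (hG : comap φ G ≤ F) :
    WeakTendsto (Function.extend φ x fun _ => c) G c := by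
  intro y ε hε
  obtain ⟨s, hs, hsub⟩ := mem_comap.1 (hG (h y ε hε))
  filter_upwards [hs] with j hj
  by_cases hjφ : ∃ i, φ i = j
  · obtain ⟨i, rfl⟩ := hjφ
    rw [hφ.extend_apply]
    exact hsub hj
  · rw [Function.extend_apply' _ _ _ hjφ, dist_self, dist_comm y c]
    linarith

theorem WeakTendsto.weakConvSeq {x : ℕ → H} (h : WeakTendsto x atTop c)
    (hx : Bornology.IsBounded (Set.range x)) : WeakConvSeq x c := by
  intro φ hφ y
  refine le_of_forall_pos_le_add fun ε hε => ?_
  obtain ⟨b, hb⟩ := exists_forall_sq_dist_le hx y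
  have hy : IsBoundedUnder (· ≤ ·) atTop fun n => dist y (x (φ n)) ^ 2 :=
    isBoundedUnder_of ⟨b, fun n => hb (φ n)⟩
  have hc : IsCoboundedUnder (· ≤ ·) atTop fun n => dist c (x (φ n)) ^ 2 :=
    (isBoundedUnder_of (r := (· ≥ ·)) ⟨0, fun _ => sq_nonneg _⟩).isCoboundedUnder_le
  refine limsup_le_of_le hc ?_
  filter_upwards [h.comp hφ.tendsto_atTop y (ε / 2) (half_pos hε),
    eventually_lt_of_limsup_lt (lt_add_of_pos_right _ (half_pos hε)) hy] with n hn hlt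
  simp only [Function.comp_apply] at hn ⊢
  linarith [sq_nonneg (dist c y)]

variable [CompleteSpace H]

theorem HadamardSpace.weakTendsto_of_forall_asymptoticRadiusSq_le (hH : HadamardSpace H)
    (hmin : ∀ s, (F ⊓ 𝓟 s).NeBot → asymptoticRadiusSq x F ≤ asymptoticRadiusSq x (F ⊓ 𝓟 s))
    (hc : ∀ ε > 0, ∀ᶠ i in F, dist c (x i) ^ 2 ≤ asymptoticRadiusSq x F + ε) :
    WeakTendsto x F c := by
  intro y ε hε
  by_contra hfreq
  rw [not_eventually] at hfreq
  set s := {i | ¬dist c (x i) ^ 2 + dist c y ^ 2 ≤ dist y (x i) ^ 2 + ε}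
  have hne : (F ⊓ 𝓟 s).NeBot := frequently_mem_iff_neBot.1 hfreq
  obtain ⟨γ, hγ, rfl, rfl⟩ := hH.geodesic c y
  set D := dist (γ 0) (γ 1) ^ 2
  obtain ⟨t, ht0, ht1, htD⟩ : ∃ t : ℝ, 0 < t ∧ t ≤ 1 ∧ t * D < ε := by
    have hD : 0 ≤ D := sq_nonneg _
    refine ⟨ε / (ε + D), by positivity, div_le_one_of_le₀ (by linarith) (by positivity), ?_⟩
    rw [div_mul_eq_mul_div, div_lt_iff₀ (by positivity)]
    gcongr
    linarith
  -- Along `s`, moving from `c` towards `y` decreases the squared distances by `t * (ε - t * D)`.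
  set η := t * (ε - t * D)
  have hη : 0 < η := mul_pos ht0 (sub_pos.2 htD)
  have hdecr : ∀ᶠ i in F ⊓ 𝓟 s, dist (γ t) (x i) ^ 2 ≤ asymptoticRadiusSq x F - η / 2 := by
    filter_upwards [mem_inf_of_left (hc (η / 2) (half_pos hη)),
      mem_inf_of_right (mem_principal_self s)] with i hci his
    have hyi := mul_le_mul_of_nonneg_left (not_le.1 his).le ht0.le
    have hcat := hH.cat0 (x i) γ hγ t ⟨ht0.le, ht1⟩
    simp only [dist_comm (x i)] at hcat
    have hη_eq : η = t * ε - t * (t * D) := mul_sub _ _ _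
    linarith only [hci, hyi, hcat, hη_eq]
  linarith [hmin s hne, asymptoticRadiusSq_le hdecr]

theorem HadamardSpace.exists_strictMono_weakTendsto (hH : HadamardSpace H) {x : ℕ → H}
    (hx : Bornology.IsBounded (Set.range x)) :
    ∃ c, ∃ φ : ℕ → ℕ, StrictMono φ ∧ WeakTendsto (x ∘ φ) atTop c := by
  obtain ⟨F, hF, _, _, hmin⟩ := exists_filter_le_forall_asymptoticRadiusSq_le hx atTop
  obtain ⟨c, hc⟩ := hH.exists_forall_eventually_sq_dist_le (F := F) hx
  obtain ⟨u, hu⟩ := F.exists_seq_tendsto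
  obtain ⟨ψ, hψ, huψ⟩ := strictMono_subseq_of_tendsto_atTop (hu.mono_right hF)
  exact ⟨c, u ∘ ψ, huψ,
    (hH.weakTendsto_of_forall_asymptoticRadiusSq_le hmin hc).comp (hu.comp hψ.tendsto_atTop)⟩

end WeakConvergence

section ConvexFunctions

variable {H : Type*} [MetricSpace H] {g : H → EReal}

theorem ConvexFun.le_coe (hg : ConvexFun g) {γ : ℝ → H} (hγ : IsGeodesic γ) {a b : ℝ}
    (ha : g (γ 0) ≤ a) (hb : g (γ 1) ≤ b) {t : ℝ} (ht : t ∈ Set.Icc (0 : ℝ) 1) :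
    g (γ t) ≤ ((1 - t) * a + t * b : ℝ) := by
  have h0 : (0 : EReal) ≤ (1 - t : ℝ) := EReal.coe_nonneg.2 (sub_nonneg.2 ht.2)
  have h1 : (0 : EReal) ≤ t := EReal.coe_nonneg.2 ht.1
  calc g (γ t) ≤ (1 - t : ℝ) * g (γ 0) + t * g (γ 1) := hg γ hγ t ht
    _ ≤ (1 - t : ℝ) * a + t * b := by gcongr
    _ = ((1 - t) * a + t * b : ℝ) := by push_cast; rfl

variable [CompleteSpace H]

theorem ConvexFun.coe_sub_mul_dist_le (hH : HadamardSpace H) (hg : ConvexFun g) {y : H}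
    {a b r : ℝ} (hr : 0 < r) (ha : g y ≤ a) (hb : ∀ z ∈ Metric.closedBall y r, (b : EReal) ≤ g z)
    (p : H) : ((b - (a - b) / r * dist y p : ℝ) : EReal) ≤ g p := by
  have hba : b ≤ a := EReal.coe_le_coe_iff.1 ((hb y (Metric.mem_closedBall_self hr.le)).trans ha)
  refine EReal.le_of_forall_lt_iff_le.1 fun v hv => EReal.coe_le_coe_iff.2 ?_
  rcases le_or_gt (dist y p) r with hle | hlt
  · have hbv := EReal.coe_le_coe_iff.1 ((hb p (Metric.mem_closedBall'.2 hle)).trans hv.le)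
    have : 0 ≤ (a - b) / r * dist y p := by have := sub_nonneg.2 hba; positivity
    linarith
  · obtain ⟨γ, hγ, rfl, rfl⟩ := hH.geodesic y p
    set d := dist (γ 0) (γ 1)
    have hd : 0 < d := hr.trans hlt
    have ht : r / d ∈ Set.Icc (0 : ℝ) 1 := ⟨by positivity, div_le_one_of_le₀ hlt.le hd.le⟩
    have hdist : dist (γ (r / d)) (γ 0) = r := by
      rw [hγ _ ht 0 (by norm_num), sub_zero, abs_of_nonneg ht.1, div_mul_cancel₀ _ hd.ne']
    have hconv := (hb _ hdist.le).trans (hg.le_coe hγ ha hv.le ht)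
    rw [EReal.coe_le_coe_iff] at hconv
    have hscale := mul_le_mul_of_nonneg_right hconv (div_pos hd hr).le
    have hexpand : ((1 - r / d) * a + r / d * v) * (d / r) = d / r * a - a + v := by
      field_simp
    have hlin : (a - b) / r * d = d / r * a - b * (d / r) := by ring
    linarith

end ConvexFunctions

section Resolvents

variable {H : Type*} [MetricSpace H] {g : H → EReal} {lam : ℝ} {x p : H}

theorem IsResolventPt.moreauEnv_eq (hp : IsResolventPt g lam x p) :
    MoreauEnv g lam x = g p + ((dist x p ^ 2 / (2 * lam) : ℝ) : EReal) :=
  le_antisymm (iInf_le _ p) (le_iInf hp)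

theorem IsResolventPt.ne_top (hp : IsResolventPt g lam x p) (hg : ∃ y, g y ≠ ⊤) : g p ≠ ⊤ := by
  obtain ⟨y, hy⟩ := hg
  have hlt := (hp y).trans_lt (EReal.add_lt_top hy (EReal.coe_ne_top _))
  rintro htop
  simp [htop] at hlt

variable [CompleteSpace H]

theorem IsResolventPt.add_sq_dist_le_of_eq_coe (hH : HadamardSpace H) (hg : ConvexFun g)
    (hlam : 0 < lam) (hp : IsResolventPt g lam x p) {y : H} {a b : ℝ} (ha : g p = a)
    (hb : g y = b) :
    a + dist x p ^ 2 / (2 * lam) + dist p y ^ 2 / (2 * lam) ≤ b + dist x y ^ 2 / (2 * lam) := by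
  obtain ⟨γ, hγ, rfl, rfl⟩ := hH.geodesic p y
  have hkey : ∀ t ∈ Set.Ioc (0 : ℝ) 1, a + dist x (γ 0) ^ 2 / (2 * lam)
      + (1 - t) * (dist (γ 0) (γ 1) ^ 2 / (2 * lam)) ≤ b + dist x (γ 1) ^ 2 / (2 * lam) := by
    intro t ht
    have ht' := Set.Ioc_subset_Icc_self ht
    have hmin := (hp (γ t)).trans (add_le_add_left (hg.le_coe hγ ha.le hb.le ht') _)
    rw [ha] at hmin
    norm_cast at hmin
    have hcat := div_le_div_of_nonneg_right (hH.cat0 x γ hγ t ht') (by positivity : 0 ≤ 2 * lam)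
    refine le_of_mul_le_mul_left ?_ ht.1
    linear_combination hmin + hcat
  have hlim : Tendsto (fun t : ℝ => a + dist x (γ 0) ^ 2 / (2 * lam)
      + (1 - t) * (dist (γ 0) (γ 1) ^ 2 / (2 * lam))) (𝓝[>] 0)
      (𝓝 (a + dist x (γ 0) ^ 2 / (2 * lam)
        + (1 - 0) * (dist (γ 0) (γ 1) ^ 2 / (2 * lam)))) :=
    (Continuous.tendsto (by fun_prop) 0).mono_left nhdsWithin_le_nhds
  rw [sub_zero, one_mul] at hlim
  exact le_of_tendsto hlim (mem_of_superset (Ioc_mem_nhdsGT zero_lt_one) hkey)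

theorem IsResolventPt.moreauEnv_add_sq_dist_le (hH : HadamardSpace H) (hg : ConvexFun g)
    (hlam : 0 < lam) (hp : IsResolventPt g lam x p) (y : H) :
    MoreauEnv g lam x + ((dist p y ^ 2 / (2 * lam) : ℝ) : EReal)
      ≤ g y + ((dist x y ^ 2 / (2 * lam) : ℝ) : EReal) := by
  have hmin := hp y
  rw [hp.moreauEnv_eq]
  induction ha : g p with
  | bot => simp
  | top =>
    rw [ha, EReal.top_add_coe, top_le_iff] at hmin
    exact le_top.trans_eq hmin.symm
  | coe a =>
    induction hb : g y with
    | bot =>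
      rw [ha, hb, EReal.bot_add, le_bot_iff] at hmin
      exact absurd hmin (EReal.coe_ne_bot _)
    | top => simp
    | coe b => exact_mod_cast hp.add_sq_dist_le_of_eq_coe hH hg hlam ha hb

end Resolvents

section MoscoConvergence

variable {H : Type*} [MetricSpace H] {fn : ℕ → H → EReal} {f : H → EReal}

theorem MoscoConv.eventually_lt_of_weakTendsto (hM : MoscoConv fn f) {φ : ℕ → ℕ}
    (hφ : StrictMono φ) {z : ℕ → H} (hz : Bornology.IsBounded (Set.range z)) {q : H}
    (hzq : WeakTendsto z atTop q) {b : EReal} (hb : b < f q) :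
    ∀ᶠ k in atTop, b < fn (φ k) (z k) := by
  set x := Function.extend φ z fun _ => q
  have hx : Bornology.IsBounded (Set.range x) := by
    refine (hz.insert q).subset ((Set.range_extend_subset _ _ _).trans ?_)
    rintro _ (h | ⟨_, _, rfl⟩)
    exacts [Set.mem_insert_of_mem _ h, Set.mem_insert _ _]
  have hcomap : comap φ atTop ≤ atTop :=
    (comap_embedding_atTop (fun _ _ => hφ.le_iff_le) fun n => ⟨n, hφ.id_le n⟩).le
  have hlow := hM.1 q x hx ((hzq.extend hφ.injective hcomap).weakConvSeq hx)
  filter_upwards [hφ.tendsto_atTop.eventually (eventually_lt_of_lt_liminf (hb.trans_le hlow))]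
    with k hk
  have hxφ : x (φ k) = z k := hφ.injective.extend_apply _ _ _
  rwa [hxφ] at hk

theorem MoscoConv.eventually_lt_add_sq_dist_of_weakTendsto (hM : MoscoConv fn f) {φ : ℕ → ℕ}
    (hφ : StrictMono φ) {z : ℕ → H} (hz : Bornology.IsBounded (Set.range z)) {q : H}
    (hzq : WeakTendsto z atTop q) {lam : ℝ} (hlam : 0 < lam) {x : H} {b : ℝ}
    (hb : b < f q + ((dist x q ^ 2 / (2 * lam) : ℝ) : EReal)) :
    ∀ᶠ k in atTop, b < fn (φ k) (z k) + ((dist x (z k) ^ 2 / (2 * lam) : ℝ) : EReal) := by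
  have hbq : ((b - dist x q ^ 2 / (2 * lam) : ℝ) : EReal) < f q := EReal.sub_lt_of_lt_add hb
  obtain ⟨a, hba, haq⟩ := EReal.lt_iff_exists_real_btwn.1 hbq
  rw [EReal.coe_lt_coe_iff] at hba
  have hε : 0 < 2 * lam * (a - (b - dist x q ^ 2 / (2 * lam))) :=
    mul_pos (by positivity) (sub_pos.2 hba)
  filter_upwards [hM.eventually_lt_of_weakTendsto hφ hz hzq haq,
    hzq.eventually_sq_dist_le x hε] with k hak hdist
  have hdiv := div_le_div_of_nonneg_right hdist (by positivity : 0 ≤ 2 * lam)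
  rw [add_div, mul_div_cancel_left₀ _ (by positivity)] at hdiv
  calc (b : EReal) ≤ ((a + dist x (z k) ^ 2 / (2 * lam) : ℝ) : EReal) :=
        EReal.coe_le_coe_iff.2 (by linarith)
    _ = a + ((dist x (z k) ^ 2 / (2 * lam) : ℝ) : EReal) := EReal.coe_add _ _
    _ < fn (φ k) (z k) + ((dist x (z k) ^ 2 / (2 * lam) : ℝ) : EReal) :=
        EReal.add_lt_add_right_coe hak _

theorem MoscoConv.exists_closedBall_forall_lt (hM : MoscoConv fn f) {c : H} {b : EReal}
    (hb : b < f c) : ∃ r > 0, ∀ᶠ n in atTop, ∀ z ∈ Metric.closedBall c r, b < fn n z := by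
  by_contra! hcon
  obtain ⟨φ, hφ, hz⟩ := extraction_forall_of_frequently fun k : ℕ =>
    (hcon (1 / ((k : ℝ) + 1)) Nat.one_div_pos_of_nat)
  choose z hzc hzb using hz
  have hlim : Tendsto z atTop (𝓝 c) := tendsto_iff_dist_tendsto_zero.2 <|
    squeeze_zero (fun _ => dist_nonneg) hzc tendsto_one_div_add_atTop_nhds_zero_nat
  obtain ⟨k, hk⟩ := (hM.eventually_lt_of_weakTendsto hφ
    (Metric.isBounded_range_of_tendsto z hlim) (weakTendsto_of_tendsto hlim) hb).exists
  exact (hzb k).not_gt hk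

theorem MoscoConv.exists_tendsto_add_sq_dist (hM : MoscoConv fn f) (lam : ℝ) (x c : H) :
    ∃ y : ℕ → H, Tendsto y atTop (𝓝 c) ∧
      Tendsto (fun n => fn n (y n) + ((dist x (y n) ^ 2 / (2 * lam) : ℝ) : EReal)) atTop
        (𝓝 (f c + ((dist x c ^ 2 / (2 * lam) : ℝ) : EReal))) := by
  obtain ⟨y, hy, hfy⟩ := hM.2 c
  have hdist : Tendsto (fun n => dist x (y n) ^ 2 / (2 * lam)) atTop
      (𝓝 (dist x c ^ 2 / (2 * lam))) :=
    (((tendsto_const_nhds (x := x)).dist hy).pow 2).div_const _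
  exact ⟨y, hy, (EReal.continuousAt_add (.inr (EReal.coe_ne_bot _))
    (.inr (EReal.coe_ne_top _))).tendsto.comp (hfy.prodMk_nhds (EReal.tendsto_coe.2 hdist))⟩

theorem MoscoConv.eventually_moreauEnv_lt (hM : MoscoConv fn f) {lam : ℝ} {x : H} {b : EReal}
    (hb : MoreauEnv f lam x < b) : ∀ᶠ n in atTop, MoreauEnv (fn n) lam x < b := by
  obtain ⟨c, hc⟩ := iInf_lt_iff.1 hb
  obtain ⟨y, -, hlim⟩ := hM.exists_tendsto_add_sq_dist lam x c
  filter_upwards [hlim.eventually (gt_mem_nhds hc)] with n hn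
  exact (iInf_le _ (y n)).trans_lt hn

variable [CompleteSpace H]

/-- Near a point where `f` is finite the `fn` are uniformly bounded below, and convexity propagates
this bound linearly. -/
theorem MoscoConv.exists_affine_minorant (hM : MoscoConv fn f) (hH : HadamardSpace H)
    (hfn : ∀ n, ConvexFun (fn n)) {c : H} (htop : f c ≠ ⊤) (hbot : f c ≠ ⊥) (x : H) :
    ∃ a L : ℝ, ∀ᶠ n in atTop, ∀ p, ((a - L * dist x p : ℝ) : EReal) ≤ fn n p := by
  obtain ⟨b, hb⟩ := EReal.lt_iff_exists_real_btwn.1 (bot_lt_iff_ne_bot.2 hbot)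
  obtain ⟨a, ha⟩ := EReal.lt_iff_exists_real_btwn.1 (lt_top_iff_ne_top.2 htop)
  have hba : 0 < a - b := sub_pos.2 (EReal.coe_lt_coe_iff.1 (hb.2.trans ha.1))
  obtain ⟨r, hr, hball⟩ := hM.exists_closedBall_forall_lt hb.2
  obtain ⟨y, hy, hfy⟩ := hM.2 c
  set L := (a - b) / (r / 2)
  refine ⟨b - L * (r / 2 + dist c x), L, ?_⟩
  filter_upwards [hball, hy (Metric.closedBall_mem_nhds c (half_pos hr)),
    hfy.eventually (gt_mem_nhds ha.1)] with n hbn hyn han p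
  have hsub : Metric.closedBall (y n) (r / 2) ⊆ Metric.closedBall c r :=
    Metric.closedBall_subset_closedBall' (by linarith [Metric.mem_closedBall.1 hyn])
  have hyp : dist (y n) p ≤ r / 2 + dist c x + dist x p :=
    (dist_triangle4 _ c x p).trans (by gcongr; exact hyn)
  refine le_trans (EReal.coe_le_coe_iff.2 ?_) <|
    (hfn n).coe_sub_mul_dist_le hH (half_pos hr) han.le (fun z hz => (hbn z (hsub hz)).le) p
  have hL : 0 ≤ L := by positivity
  change b - L * (r / 2 + dist c x) - L * dist x p ≤ b - L * dist (y n) p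
  linarith [mul_le_mul_of_nonneg_left hyp hL]

theorem MoscoConv.exists_dist_le_of_add_sq_dist_le (hM : MoscoConv fn f) (hH : HadamardSpace H)
    (hfn : ∀ n, ConvexFun (fn n)) {c : H} (htop : f c ≠ ⊤) (hbot : f c ≠ ⊥) {lam : ℝ}
    (hlam : 0 < lam) (x : H) (b : ℝ) :
    ∃ R, ∀ᶠ n in atTop, ∀ p, fn n p + ((dist x p ^ 2 / (2 * lam) : ℝ) : EReal) ≤ b →
      dist x p ≤ R := by
  obtain ⟨a, L, hminorant⟩ := hM.exists_affine_minorant hH hfn htop hbot x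
  refine ⟨lam * L + √(2 * lam * (b - a) + (lam * L) ^ 2), hminorant.mono fun n hn p hp => ?_⟩
  have hreal : a - L * dist x p + dist x p ^ 2 / (2 * lam) ≤ b := by
    exact_mod_cast (add_le_add_left (hn p) _).trans hp
  have hmul := mul_le_mul_of_nonneg_left hreal (by positivity : 0 ≤ 2 * lam)
  rw [mul_add, mul_div_cancel₀ _ (by positivity)] at hmul
  have hsq : (dist x p - lam * L) ^ 2 ≤ 2 * lam * (b - a) + (lam * L) ^ 2 := by linarith
  linarith [Real.le_sqrt_of_sq_le hsq]

theorem MoscoConv.eventually_lt_moreauEnv (hM : MoscoConv fn f) (hH : HadamardSpace H)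
    (hfn : ∀ n, ConvexFun (fn n)) {c : H} (htop : f c ≠ ⊤) (hbot : f c ≠ ⊥) {lam : ℝ}
    (hlam : 0 < lam) {x : H} {b : EReal} (hb : b < MoreauEnv f lam x) :
    ∀ᶠ n in atTop, b < MoreauEnv (fn n) lam x := by
  obtain ⟨b', hbb', hb'⟩ := EReal.lt_iff_exists_real_btwn.1 hb
  obtain ⟨R, hR⟩ := hM.exists_dist_le_of_add_sq_dist_le hH hfn htop hbot hlam x b'
  by_contra hcon
  have hfreq : ∃ᶠ n in atTop, ∃ p, dist x p ≤ R ∧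
      fn n p + ((dist x p ^ 2 / (2 * lam) : ℝ) : EReal) ≤ b' := by
    refine ((not_eventually.1 hcon).and_eventually hR).mono fun n ⟨hn, hRn⟩ => ?_
    obtain ⟨p, hp⟩ := iInf_lt_iff.1 ((not_lt.1 hn).trans_lt hbb')
    exact ⟨p, hRn p hp.le, hp.le⟩
  obtain ⟨φ, hφ, hp⟩ := extraction_of_frequently_atTop hfreq
  choose p hpR hpb using hp
  have hpbdd : Bornology.IsBounded (Set.range p) :=
    Metric.isBounded_closedBall.subset
      (Set.range_subset_iff.2 fun k => Metric.mem_closedBall'.2 (hpR k))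
  obtain ⟨q, ψ, hψ, hpq⟩ := hH.exists_strictMono_weakTendsto hpbdd
  obtain ⟨k, hk⟩ := (hM.eventually_lt_add_sq_dist_of_weakTendsto (hφ.comp hψ)
    (hpbdd.subset (Set.range_comp_subset_range ψ p)) hpq hlam
    (hb'.trans_le (iInf_le _ q))).exists
  exact hk.not_ge (hpb (ψ k))

theorem MoscoConv.tendsto_moreauEnv (hM : MoscoConv fn f) (hH : HadamardSpace H)
    (hfn : ∀ n, ConvexFun (fn n)) {c : H} (htop : f c ≠ ⊤) (hbot : f c ≠ ⊥) {lam : ℝ}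
    (hlam : 0 < lam) (x : H) :
    Tendsto (fun n => MoreauEnv (fn n) lam x) atTop (𝓝 (MoreauEnv f lam x)) :=
  tendsto_order.2 ⟨fun _ hb => hM.eventually_lt_moreauEnv hH hfn htop hbot hlam hb,
    fun _ hb => hM.eventually_moreauEnv_lt hb⟩

theorem MoscoConv.tendsto_resolvent (hM : MoscoConv fn f) (hH : HadamardSpace H)
    (hfn : ∀ n, ConvexFun (fn n)) {lam : ℝ} (hlam : 0 < lam) {x c : H} (htop : f c ≠ ⊤)
    (hbot : f c ≠ ⊥) (hc : IsResolventPt f lam x c) {p : ℕ → H}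
    (hp : ∀ n, IsResolventPt (fn n) lam x (p n)) : Tendsto p atTop (𝓝 c) := by
  obtain ⟨y, hy, hlim⟩ := hM.exists_tendsto_add_sq_dist lam x c
  have henv := hM.tendsto_moreauEnv hH hfn htop hbot hlam x
  rw [hc.moreauEnv_eq] at henv
  lift f c to ℝ using ⟨htop, hbot⟩ with v
  rw [← EReal.coe_add] at henv hlim
  have hsq : Tendsto (fun n => dist (p n) (y n) ^ 2 / (2 * lam)) atTop (𝓝 0) :=
    tendsto_zero_of_coe_add_le henv hlim (fun n => by positivity) fun n =>
      (hp n).moreauEnv_add_sq_dist_le hH (hfn n) hlam (y n)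
  have hdist : Tendsto (fun n => dist (y n) (p n)) atTop (𝓝 0) := by
    have h := (hsq.const_mul (2 * lam)).sqrt
    simpa [mul_div_cancel₀, hlam.ne', Real.sqrt_sq, dist_comm] using h
  exact (tendsto_iff_of_dist hdist).1 hy

end MoscoConvergence

theorem mosco_implies_resolvent_convergence_general
    {H : Type*} [MetricSpace H] [CompleteSpace H] (hH : HadamardSpace H)
    {f : H → EReal} {fn : ℕ → H → EReal} (hdom : ∃ y, f y ≠ ⊤) (hbot : ∀ y, f y ≠ ⊥)
    (hfn : ∀ n, ConvexFun (fn n)) (hM : MoscoConv fn f) {lam : ℝ} (hlam : 0 < lam)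
    {x c : H} {p : ℕ → H} (hc : IsResolventPt f lam x c)
    (hp : ∀ n, IsResolventPt (fn n) lam x (p n)) :
    Tendsto (fun n => MoreauEnv (fn n) lam x) atTop (𝓝 (MoreauEnv f lam x)) ∧
    Tendsto p atTop (𝓝 c) := by
  have htop := hc.ne_top hdom
  exact ⟨hM.tendsto_moreauEnv hH hfn htop (hbot c) hlam x,
    hM.tendsto_resolvent hH hfn hlam htop (hbot c) hc hp⟩

/-- Mosco convergence of proper convex lsc functions on a Hadamard space
implies convergence of the Moreau–Yosida envelopes and strong convergence of the resolvents. -/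
theorem mosco_implies_resolvent_convergence
    {H : Type*} [MetricSpace H] [CompleteSpace H] (hH : HadamardSpace H)
    (f : H → EReal) (fn : ℕ → H → EReal)
    (hf : ProperConvexLsc f) (hfn : ∀ n, ProperConvexLsc (fn n))
    (J : ℝ → H → H) (Jn : ℕ → ℝ → H → H)
    (hJ : ∀ lam > (0:ℝ), ∀ x : H, IsResolventPt f lam x (J lam x))
    (hJn : ∀ n, ∀ lam > (0:ℝ), ∀ x : H, IsResolventPt (fn n) lam x (Jn n lam x))
    (hM : MoscoConv fn f) :
    ∀ lam > (0:ℝ), ∀ x : H,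
      Tendsto (fun n => MoreauEnv (fn n) lam x) atTop (𝓝 (MoreauEnv f lam x)) ∧
      Tendsto (fun n => Jn n lam x) atTop (𝓝 (J lam x)) := fun lam hlam x =>
  mosco_implies_resolvent_convergence_general hH hf.1 hf.2.1 (fun n => (hfn n).2.2.1) hM hlam
    (hJ lam hlam x) fun n => hJn n lam hlam x
end

section
/- Let (H,d) be a Hadamard space and let f, f^n : H → (−∞,∞] (n ∈ ℕ) be proper convex lower semicontinuous functions such that f^n → f in the sense of Mosco. Then for every x₀ ∈ H there exist constants α, β > 0 such that f^n(y) ≥ −α·d(y,x₀) − β for every y ∈ H and every n ∈ ℕ. -/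
open Filter Topology
open scoped Classical

/-!
The idea is that the liminf inequality along strongly convergent sequences at one point `z` with
`f z` finite already bounds all `fn n` with `n` large from below by a constant on a common ball
around `z`: a violating sequence could be chosen to converge to `z`. Since `fn n` is also bounded
above along a recovery sequence `ys n → z`, convexity along the geodesic from `ys n` to an arbitrary
point `y` propagates the bound on the ball to a lower bound that is affine in the distance. The
finitely many remaining functions are treated as constant sequences, lower semicontinuity being
the liminf inequality.
-/

theorem exists_forall_of_eventually_cofinite {ι α : Type*} [Preorder α] [IsDirectedOrder α]
    {P : ι → α → Prop} (hmono : ∀ i, Monotone (P i)) {c : α} (hc : ∀ᶠ i in cofinite, P i c)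
    (hP : ∀ i, ∃ a, P i a) : ∃ a, ∀ i, P i a := by
  have : Nonempty α := ⟨c⟩
  choose a ha using hP
  obtain ⟨b, hb⟩ := ((eventually_cofinite.1 hc).image a).bddAbove
  obtain ⟨d, hcd, hbd⟩ := exists_ge_ge c b
  refine ⟨d, fun i => ?_⟩
  by_cases hi : P i c
  · exact hmono i hcd hi
  · exact hmono i ((hb (Set.mem_image_of_mem a hi)).trans hbd) (ha i)

theorem tendsto_extend_cofinite {α β X : Type*} {l : Filter X} {ψ : α → β} {v : α → X} {w : β → X}
    (hv : Tendsto v cofinite l) (hw : Tendsto w cofinite l) :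
    Tendsto (Function.extend ψ v w) cofinite l := by
  intro s hs
  have hfin : (ψ '' (v ⁻¹' s)ᶜ ∪ (w ⁻¹' s)ᶜ).Finite := ((hv hs).image ψ).union (hw hs)
  refine hfin.subset fun b hb => ?_
  by_cases h : ∃ a, ψ a = b
  · refine Or.inl ⟨h.choose, fun hmem => hb ?_, h.choose_spec⟩
    rwa [Set.mem_preimage, Function.extend_def, dif_pos h]
  · exact Or.inr fun hmem => hb (by rwa [Set.mem_preimage, Function.extend_apply' _ _ _ h])

theorem eventually_atTop_prod_of_forall_seq {X : Type*} {l : Filter X} [l.IsCountablyGenerated]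
    {p : ℕ → X → Prop}
    (h : ∀ xs : ℕ → X, Tendsto xs atTop l → ∀ᶠ n in atTop, p n (xs n)) :
    ∀ᶠ q in atTop ×ˢ l, p q.1 q.2 := by
  obtain ⟨s, hs⟩ := l.exists_antitone_basis
  by_contra hcon
  have hbad : ∀ k, ∃ᶠ n in atTop, ∃ w ∈ s k, ¬ p n w := by
    intro k hk
    refine hcon ?_
    filter_upwards [hk.prod_mk (hs.mem k)] with q hq
    by_contra hpq
    exact hq.1 ⟨q.2, hq.2, hpq⟩
  obtain ⟨ψ, hψ, hw⟩ := extraction_forall_of_frequently hbad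
  choose w hws hwp using hw
  have hwl : Tendsto w cofinite l := Nat.cofinite_eq_atTop ▸ hs.tendsto hws
  have hxs := tendsto_extend_cofinite (ψ := ψ) hwl hwl
  rw [Nat.cofinite_eq_atTop] at hxs
  obtain ⟨k, hk⟩ := (hψ.tendsto_atTop.eventually (h _ hxs)).exists
  rw [hψ.injective.extend_apply] at hk
  exact hwp k hk

/-- Sequential epi-convergence (Γ-convergence) of `fn` to `f` at the point `z`: the two conditions
of Mosco convergence at `z`, with strong convergence in both of them. -/
structure EpiConvAt {X : Type*} [TopologicalSpace X] (fn : ℕ → X → EReal) (f : X → EReal) (z : X) :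
    Prop where
  le_liminf : ∀ xs : ℕ → X, Tendsto xs atTop (𝓝 z) → f z ≤ liminf (fun n => fn n (xs n)) atTop
  exists_recovery : ∃ ys : ℕ → X, Tendsto ys atTop (𝓝 z) ∧
    Tendsto (fun n => fn n (ys n)) atTop (𝓝 (f z))

theorem epiConvAt_const {X : Type*} [TopologicalSpace X] {g : X → EReal} {z : X}
    (hg : LowerSemicontinuousAt g z) : EpiConvAt (fun _ => g) g z where
  le_liminf _ hxs := hg.le_liminf.trans (liminf_le_liminf_of_le hxs)
  exists_recovery := ⟨fun _ => z, tendsto_const_nhds, tendsto_const_nhds⟩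

theorem EpiConvAt.exists_closedBall_eventually_le {X : Type*} [PseudoMetricSpace X]
    {fn : ℕ → X → EReal} {f : X → EReal} {z : X} (h : EpiConvAt fn f z) {m : EReal}
    (hm : m < f z) :
    ∃ δ > 0, ∀ᶠ n in atTop, ∀ w ∈ Metric.closedBall z δ, m ≤ fn n w := by
  have hev : ∀ᶠ q in atTop ×ˢ 𝓝 z, m < fn q.1 q.2 :=
    eventually_atTop_prod_of_forall_seq (p := fun n w => m < fn n w) fun xs hxs =>
      eventually_lt_of_lt_liminf (hm.trans_le (h.le_liminf xs hxs))
  obtain ⟨p, hp, q, hq, hpq⟩ := eventually_prod_iff.1 hev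
  obtain ⟨δ, hδ, hball⟩ := Metric.nhds_basis_closedBall.eventually_iff.1 hq
  exact ⟨δ, hδ, hp.mono fun n hn w hw => (hpq hn (hball hw)).le⟩

/-- A geodesic metric space: any two points are joined by a geodesic. -/
def GeodesicSpace (H : Type*) [MetricSpace H] : Prop :=
  ∀ x y : H, ∃ γ : ℝ → H, IsGeodesic γ ∧ γ 0 = x ∧ γ 1 = y

/-- `g` lies above the cone `y ↦ -α d(y, x₀) - β`, where `c = (α, β)`. Slope and height form a pair
so that the bounds for several functions can be compared in the order of `ℝ × ℝ`. -/
def HasConeMinorant {H : Type*} [MetricSpace H] (g : H → EReal) (x₀ : H) (c : ℝ × ℝ) : Prop :=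
  ∀ y : H, ((-c.1 * dist y x₀ - c.2 : ℝ) : EReal) ≤ g y

section Metric

variable {H : Type*} [MetricSpace H]

theorem weakConvSeq_of_tendsto {x : ℕ → H} {c : H} (hx : Tendsto x atTop (𝓝 c)) :
    WeakConvSeq x c := by
  intro φ hφ y
  have hlim (a : H) : limsup (fun n => dist a ((x ∘ φ) n) ^ 2) atTop = dist a c ^ 2 :=
    ((tendsto_const_nhds.dist (hx.comp hφ.tendsto_atTop)).pow 2).limsup_eq
  rw [hlim, hlim, dist_self, zero_pow two_ne_zero]
  exact sq_nonneg _

theorem MoscoConv.epiConvAt {fn : ℕ → H → EReal} {f : H → EReal} (h : MoscoConv fn f) (z : H) :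
    EpiConvAt fn f z where
  le_liminf xs hxs := h.1 z xs (Metric.isBounded_range_of_tendsto xs hxs)
    (weakConvSeq_of_tendsto hxs)
  exists_recovery := h.2 z

theorem HasConeMinorant.monotone (g : H → EReal) (x₀ : H) : Monotone (HasConeMinorant g x₀) := by
  intro c c' hcc' hc y
  refine (EReal.coe_le_coe_iff.2 ?_).trans (hc y)
  have := mul_le_mul_of_nonneg_right hcc'.1 (dist_nonneg (x := y) (y := x₀))
  linarith [hcc'.2]

theorem HasConeMinorant.change_apex {g : H → EReal} {p x₀ : H} {c : ℝ × ℝ}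
    (h : HasConeMinorant g p c) (hc : 0 ≤ c.1) :
    HasConeMinorant g x₀ (c.1, c.2 + c.1 * dist p x₀) := by
  intro y
  refine (EReal.coe_le_coe_iff.2 ?_).trans (h y)
  have := mul_le_mul_of_nonneg_left (dist_triangle_right y p x₀) hc
  linarith

variable {g : H → EReal} {δ m M : ℝ}

theorem ConvexFun.apply_le_of_le (hg : ConvexFun g) {γ : ℝ → H} (hγ : IsGeodesic γ) {a b t : ℝ}
    (ht : t ∈ Set.Icc (0 : ℝ) 1) (ha : g (γ 0) ≤ a) (hb : g (γ 1) ≤ b) :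
    g (γ t) ≤ ((1 - t) * a + t * b : ℝ) := by
  refine (hg γ hγ t ht).trans ?_
  rw [EReal.coe_add, EReal.coe_mul, EReal.coe_mul]
  gcongr
  · exact EReal.coe_nonneg.2 (sub_nonneg.2 ht.2)
  · exact EReal.coe_nonneg.2 ht.1

theorem ConvexFun.le_apply_one_of_le_on_closedBall (hg : ConvexFun g) {γ : ℝ → H}
    (hγ : IsGeodesic γ) (hδ : 0 < δ) (hM : g (γ 0) ≤ M)
    (hm : ∀ w ∈ Metric.closedBall (γ 0) δ, (m : EReal) ≤ g w) :
    ((m - (M - m) / δ * dist (γ 0) (γ 1) : ℝ) : EReal) ≤ g (γ 1) := by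
  refine EReal.le_of_forall_lt_iff_le.1 fun b hb => EReal.coe_le_coe_iff.2 ?_
  set d := dist (γ 0) (γ 1)
  have hd : 0 ≤ d := dist_nonneg
  have hδd : 0 < δ + d := by positivity
  set t := δ / (δ + d)
  have ht : t ∈ Set.Icc (0 : ℝ) 1 := ⟨by positivity, (div_le_one hδd).2 (by linarith)⟩
  have hball : γ t ∈ Metric.closedBall (γ 0) δ := by
    rw [Metric.mem_closedBall, hγ t ht 0 (by simp), sub_zero, abs_of_nonneg ht.1,
      div_mul_eq_mul_div, div_le_iff₀ hδd]
    nlinarith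
  have hmb : m ≤ (1 - t) * M + t * b :=
    EReal.coe_le_coe_iff.1 ((hm _ hball).trans (hg.apply_le_of_le hγ ht hM hb.le))
  have hmul : (δ + d) * m ≤ d * M + δ * b :=
    calc (δ + d) * m ≤ (δ + d) * ((1 - t) * M + t * b) := mul_le_mul_of_nonneg_left hmb hδd.le
      _ = d * M + δ * b := by simp only [t]; field_simp; ring
  calc m - (M - m) / δ * d = ((δ + d) * m - d * M) / δ := by field_simp; ring
    _ ≤ b := (div_le_iff₀' hδ).2 (by linarith)

theorem ConvexFun.hasConeMinorant (hH : GeodesicSpace H) (hg : ConvexFun g) {p : H} (hδ : 0 < δ)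
    (hM : g p ≤ M) (hm : ∀ w ∈ Metric.closedBall p δ, (m : EReal) ≤ g w) :
    HasConeMinorant g p ((M - m) / δ, -m) := by
  intro y
  obtain ⟨γ, hγ, rfl, rfl⟩ := hH p y
  convert hg.le_apply_one_of_le_on_closedBall hγ hδ hM hm using 2
  rw [dist_comm]
  ring

theorem EpiConvAt.exists_eventually_hasConeMinorant (hH : GeodesicSpace H) {fn : ℕ → H → EReal}
    {f : H → EReal} {z : H} (h : EpiConvAt fn f z) (hfn : ∀ n, ConvexFun (fn n))
    (hbot : f z ≠ ⊥) (htop : f z ≠ ⊤) (x₀ : H) :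
    ∃ c, ∀ᶠ n in atTop, HasConeMinorant (fn n) x₀ c := by
  obtain ⟨m, -, hm⟩ := EReal.lt_iff_exists_real_btwn.1 (bot_lt_iff_ne_bot.2 hbot)
  obtain ⟨M, hM, -⟩ := EReal.lt_iff_exists_real_btwn.1 (lt_top_iff_ne_top.2 htop)
  have hmM : m ≤ M := EReal.coe_le_coe_iff.1 (hm.trans hM).le
  obtain ⟨δ, hδ, hball⟩ := h.exists_closedBall_eventually_le hm
  obtain ⟨ys, hys, hfys⟩ := h.exists_recovery
  set L := (M - m) / (δ / 2)
  have hL : 0 ≤ L := div_nonneg (sub_nonneg.2 hmM) (half_pos hδ).le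
  refine ⟨(L, -m + L * (dist z x₀ + 1)), ?_⟩
  filter_upwards [hball, hys.eventually (Metric.closedBall_mem_nhds z (half_pos hδ)),
    hfys.eventually_lt_const hM,
    (hys.dist tendsto_const_nhds).eventually_le_const (lt_add_one (dist z x₀))]
    with n hn hyz hyM hyx₀
  have hsub : Metric.closedBall (ys n) (δ / 2) ⊆ Metric.closedBall z δ :=
    Metric.closedBall_subset_closedBall' (by linarith [Metric.mem_closedBall.1 hyz])
  have hcone : HasConeMinorant (fn n) (ys n) (L, -m) :=
    (hfn n).hasConeMinorant hH (half_pos hδ) hyM.le fun w hw => hn w (hsub hw)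
  have hheight : -m + L * dist (ys n) x₀ ≤ -m + L * (dist z x₀ + 1) := by gcongr
  exact HasConeMinorant.monotone _ _ (Prod.mk_le_mk.2 ⟨le_rfl, hheight⟩) (hcone.change_apex hL)

theorem ProperConvexLsc.exists_hasConeMinorant (hH : GeodesicSpace H) (hg : ProperConvexLsc g)
    (x₀ : H) : ∃ c, HasConeMinorant g x₀ c := by
  obtain ⟨⟨p, hp⟩, hbot, hconv, hlsc⟩ := hg
  obtain ⟨c, hc⟩ := (epiConvAt_const (hlsc p)).exists_eventually_hasConeMinorant hH
    (fun _ => hconv) (hbot p) hp x₀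
  exact ⟨c, hc.exists.choose_spec⟩

end Metric

theorem mosco_uniform_affine_lower_bound_general {H : Type*} [MetricSpace H]
    (hH : GeodesicSpace H) {f : H → EReal} {fn : ℕ → H → EReal} {z : H} (hbot : f z ≠ ⊥)
    (htop : f z ≠ ⊤) (hfn : ∀ n, ProperConvexLsc (fn n)) (h : EpiConvAt fn f z) (x₀ : H) :
    ∃ α > (0:ℝ), ∃ β > (0:ℝ), ∀ (y : H) (n : ℕ),
      ((-α * dist y x₀ - β : ℝ) : EReal) ≤ fn n y := by
  obtain ⟨c, hc⟩ := h.exists_eventually_hasConeMinorant hH (fun n => (hfn n).2.2.1) hbot htop x₀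
  rw [← Nat.cofinite_eq_atTop] at hc
  obtain ⟨⟨α, β⟩, hαβ⟩ := exists_forall_of_eventually_cofinite
    (fun n => HasConeMinorant.monotone (fn n) x₀) hc
    (fun n => (hfn n).exists_hasConeMinorant hH x₀)
  refine ⟨max α 1, by positivity, max β 1, by positivity, fun y n => ?_⟩
  exact HasConeMinorant.monotone (fn n) x₀
    (Prod.mk_le_mk.2 ⟨le_max_left α 1, le_max_left β 1⟩) (hαβ n) y

/-- If proper convex lsc functions `fn` Mosco-converge to `f` on a Hadamard
space, then for every `x₀` there are constants `α, β > 0` with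
`fn n y ≥ −α·d(y,x₀) − β` for all `y` and `n`. -/
theorem mosco_uniform_affine_lower_bound
    {H : Type*} [MetricSpace H] [CompleteSpace H] (hH : HadamardSpace H)
    (f : H → EReal) (fn : ℕ → H → EReal)
    (hf : ProperConvexLsc f) (hfn : ∀ n, ProperConvexLsc (fn n))
    (hM : MoscoConv fn f) :
    ∀ x₀ : H, ∃ α > (0:ℝ), ∃ β > (0:ℝ), ∀ (y : H) (n : ℕ),
      ((-α * dist y x₀ - β : ℝ) : EReal) ≤ fn n y := by
  obtain ⟨z, hz⟩ := hf.1
  exact mosco_uniform_affine_lower_bound_general hH.geodesic (hf.2.1 z) hz hfn (hM.epiConvAt z)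
end

section
/- In a Hadamard space (H,d), every bounded sequence has a weakly convergent subsequence; equivalently, every bounded sequence has a weak cluster point. -/
open Filter Topology
open scoped Classical

/-! The asymptotic radius of a filter, `inf_y limsup d(y, ·)`, decreases when the filter is refined.
A diagonal argument yields a subsequence whose asymptotic radius cannot be decreased by passing to
further subsequences. A point minimizing `y ↦ limsup d(y, ·)` for that subsequence then minimizes it
for every further one, because the values at this point can only decrease while the infimum stays
fixed. Minimizers exist because, by uniform convexity, near-minimizers are close to each other. -/

open TopologicalSpace
open scoped ENNReal

section Order

/-- A form of the Brezis–Browder ordering principle. -/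
theorem exists_forall_le_eq_of_forall_antitone_exists_le {P α : Type*} [Preorder P] [Nonempty P]
    [LinearOrder α] [DenselyOrdered α] [TopologicalSpace α] [OrderTopology α] [SeparableSpace α]
    (hP : ∀ u : ℕ → P, Antitone u → ∃ p, ∀ k, p ≤ u k) {r : P → α} (hr : Monotone r) :
    ∃ p, ∀ q ≤ p, r q = r p := by
  have : Nonempty α := Nonempty.map r inferInstance
  have hstep (k : ℕ) (p : P) : ∃ q ≤ p, ∀ s ≤ p, r s < denseSeq α k → r q < denseSeq α k := by
    by_cases h : ∃ s ≤ p, r s < denseSeq α k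
    · obtain ⟨q, hqp, hq⟩ := h
      exact ⟨q, hqp, fun _ _ _ => hq⟩
    · exact ⟨p, le_rfl, fun s hsp hs => absurd ⟨s, hsp, hs⟩ h⟩
  choose next next_le next_lt using hstep
  let u : ℕ → P := fun n => Nat.rec (Classical.arbitrary P) next n
  obtain ⟨p, hp⟩ := hP u (antitone_nat_of_succ_le fun k => next_le k (u k))
  refine ⟨p, fun q hqp => (hr hqp).eq_of_not_lt fun hlt => ?_⟩
  obtain ⟨_, ⟨k, rfl⟩, hqk, hkp⟩ := (denseRange_denseSeq α).exists_between hlt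
  have hk : r (u (k + 1)) < denseSeq α k := next_lt k (u k) q (hqp.trans (hp k)) hqk
  exact (hkp.trans_le (hr (hp (k + 1)))).not_gt hk

theorem exists_strictMono_forall_map_comp_eq {α : Type*} [LinearOrder α] [DenselyOrdered α]
    [TopologicalSpace α] [OrderTopology α] [SeparableSpace α] {r : Filter ℕ → α}
    (hr : Monotone r) :
    ∃ φ : ℕ → ℕ, StrictMono φ ∧
      ∀ ψ : ℕ → ℕ, StrictMono ψ → r (map (φ ∘ ψ) atTop) = r (map φ atTop) := by
  -- Countable generation is what lets the minimal filter be refined by a sequence.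
  let P := {F : Filter ℕ // F.NeBot ∧ F.IsCountablyGenerated ∧ F ≤ atTop}
  have : Nonempty P := ⟨atTop, inferInstance, inferInstance, le_rfl⟩
  have hP (u : ℕ → P) (hu : Antitone u) : ∃ F, ∀ k, F ≤ u k := by
    have hne (k : ℕ) := (u k).2.1
    have hcg (k : ℕ) := (u k).2.2.1
    exact ⟨⟨⨅ k, (u k).1, iInf_neBot_of_directed (Antitone.directed_ge hu) hne, inferInstance,
      (iInf_le _ 0).trans (u 0).2.2.2⟩, fun k => iInf_le (fun k => (u k).1) k⟩
  obtain ⟨⟨F, hF_neBot, hF_gen, hF_le⟩, hF⟩ :=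
    exists_forall_le_eq_of_forall_antitone_exists_le hP (r := fun F => r F.1) fun _ _ h => hr h
  have hconst (v : ℕ → ℕ) (hv : Tendsto v atTop F) : r (map v atTop) = r F :=
    hF ⟨map v atTop, inferInstance, inferInstance, le_trans hv hF_le⟩ hv
  obtain ⟨u, hu⟩ := exists_seq_tendsto F
  obtain ⟨θ, hθ, huθ⟩ := strictMono_subseq_of_tendsto_atTop (hu.mono_right hF_le)
  have hφ : Tendsto (u ∘ θ) atTop F := hu.comp hθ.tendsto_atTop
  exact ⟨u ∘ θ, huθ, fun ψ hψ =>
    (hconst _ (hφ.comp hψ.tendsto_atTop)).trans (hconst _ hφ).symm⟩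

end Order

theorem exists_forall_le_of_forall_exists_dist_lt {X β : Type*} [PseudoMetricSpace X]
    [CompleteSpace X] [Nonempty X] [CompleteLinearOrder β] [TopologicalSpace β] [OrderTopology β]
    {f : X → β} (hf : LowerSemicontinuous f)
    (hclose : ∀ ε > 0, ∃ t > ⨅ y, f y, ∀ a b, f a < t → f b < t → dist a b < ε) :
    ∃ c, ∀ y, f c ≤ f y := by
  set r := ⨅ y, f y
  have hne : (comap f (𝓝 r)).NeBot := by
    rw [comap_neBot_iff_frequently]
    exact mem_closure_iff_frequently.1 (sInf_mem_closure (Set.range_nonempty f))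
  have hcauchy : Cauchy (comap f (𝓝 r)) := by
    refine Metric.cauchy_iff.2 ⟨hne, fun ε hε => ?_⟩
    obtain ⟨t, hrt, ht⟩ := hclose ε hε
    exact ⟨f ⁻¹' Set.Iio t, preimage_mem_comap (Iio_mem_nhds hrt), fun a ha b hb => ht a b ha hb⟩
  obtain ⟨c, hc⟩ := CompleteSpace.complete hcauchy
  refine ⟨c, fun y => ?_⟩
  calc f c ≤ liminf f (𝓝 c) := lowerSemicontinuousAt_iff_le_liminf.1 (hf c)
    _ ≤ liminf f (comap f (𝓝 r)) := liminf_le_liminf_of_le hc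
    _ = r := tendsto_comap.liminf_eq
    _ ≤ f y := iInf_le f y

section AsymptoticRadius

variable {X : Type*} [PseudoEMetricSpace X] {F G : Filter X}

/-- The asymptotic radius of a filter at a point `y`. For a sequence `x`, take the filter
`map x atTop`; values in `ℝ≥0∞` avoid all boundedness conditions on `x`. -/
noncomputable def asymptoticRadiusAt (F : Filter X) (y : X) : ℝ≥0∞ :=
  limsup (edist y) F

/-- The asymptotic radius of a filter; its asymptotic centers are the points where the infimum is
attained. -/
noncomputable def asymptoticRadius (F : Filter X) : ℝ≥0∞ :=
  ⨅ y, asymptoticRadiusAt F y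

theorem asymptoticRadiusAt_mono (h : F ≤ G) (y : X) :
    asymptoticRadiusAt F y ≤ asymptoticRadiusAt G y :=
  limsup_le_limsup_of_le h

theorem asymptoticRadius_mono : Monotone (asymptoticRadius (X := X)) :=
  fun _ _ h => iInf_mono (asymptoticRadiusAt_mono h)

theorem asymptoticRadiusAt_le_edist_add (F : Filter X) [F.NeBot] (a b : X) :
    asymptoticRadiusAt F a ≤ edist a b + asymptoticRadiusAt F b :=
  calc asymptoticRadiusAt F a ≤ limsup (fun z => edist a b + edist b z) F :=
        limsup_le_limsup (.of_forall (edist_triangle a b))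
    _ = edist a b + asymptoticRadiusAt F b :=
        limsup_const_add F _ _ (by isBoundedDefault) (by isBoundedDefault)

theorem continuous_asymptoticRadiusAt (F : Filter X) [F.NeBot] :
    Continuous (asymptoticRadiusAt F) :=
  continuous_of_le_add_edist 1 ENNReal.one_ne_top fun a b => by
    simpa only [one_mul, add_comm] using asymptoticRadiusAt_le_edist_add F a b

end AsymptoticRadius

section Bounded

variable {X : Type*} [PseudoMetricSpace X] {F : Filter X} {s : Set X}

theorem exists_eventually_edist_le_of_isBounded (hs : Bornology.IsBounded s) (hsF : s ∈ F)
    (y : X) : ∃ C ≠ (⊤ : ℝ≥0∞), ∀ᶠ z in F, edist y z ≤ C := by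
  obtain ⟨K, hK⟩ := hs.subset_closedBall y
  refine ⟨ENNReal.ofReal K, ENNReal.ofReal_ne_top, mem_of_superset hsF fun z hz => ?_⟩
  change edist y z ≤ ENNReal.ofReal K
  rw [edist_comm, edist_dist]
  exact ENNReal.ofReal_le_ofReal (hK hz)

theorem asymptoticRadiusAt_ne_top (hs : Bornology.IsBounded s) (hsF : s ∈ F) (y : X) :
    asymptoticRadiusAt F y ≠ ⊤ := by
  obtain ⟨C, hC, hle⟩ := exists_eventually_edist_le_of_isBounded hs hsF y
  exact ne_top_of_le_ne_top hC (limsup_le_of_le (h := hle))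

theorem limsup_dist_sq_eq_toReal_sq [F.NeBot] (hs : Bornology.IsBounded s) (hsF : s ∈ F)
    (y : X) : limsup (fun z => dist y z ^ 2) F = (asymptoticRadiusAt F y).toReal ^ 2 := by
  obtain ⟨C, hC, hle⟩ := exists_eventually_edist_le_of_isBounded hs hsF y
  have hle_sq : ∀ᶠ z in F, edist y z ^ 2 ≤ C ^ 2 := by
    filter_upwards [hle] with z hz
    gcongr
  calc limsup (fun z => dist y z ^ 2) F
      = limsup (fun z => (edist y z ^ 2).toReal) F := by
        simp only [ENNReal.toReal_pow, dist_edist]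
    _ = (limsup (fun z => edist y z ^ 2) F).toReal :=
        ENNReal.limsup_toReal_eq (ENNReal.pow_ne_top hC) hle_sq
    _ = (asymptoticRadiusAt F y ^ 2).toReal :=
        congrArg ENNReal.toReal ((pow_left_mono 2).map_limsup_of_continuousAt (edist y)
          (ENNReal.continuous_pow 2).continuousAt).symm
    _ = (asymptoticRadiusAt F y).toReal ^ 2 := ENNReal.toReal_pow _ 2

end Bounded

section UniformlyConvex

/-- Uniform convexity of a metric space: the common part of two balls of radius slightly larger
than `r` whose centers are `ε` apart lies in a ball of radius slightly smaller than `r`. No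
geodesics are required. In a uniformly convex Banach space or a Hadamard space, `m` can be taken to
be the midpoint of `a` and `b`. -/
def UniformlyConvexMetric (X : Type*) [PseudoMetricSpace X] : Prop :=
  ∀ ⦃r ε : ℝ⦄, 0 < r → 0 < ε → ∃ s < r, ∃ t > r, ∀ a b : X, ε ≤ dist a b →
    ∃ m, ∀ y, dist y a < t → dist y b < t → dist y m ≤ s

variable {X : Type*} [PseudoMetricSpace X] {F : Filter X}

theorem eventually_dist_lt_of_asymptoticRadiusAt_lt {a : X} {t : ℝ}
    (h : asymptoticRadiusAt F a < ENNReal.ofReal t) : ∀ᶠ z in F, dist z a < t := by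
  filter_upwards [eventually_lt_of_limsup_lt h] with z hz
  rwa [dist_comm, ← edist_lt_ofReal]

theorem UniformlyConvexMetric.exists_dist_lt_of_asymptoticRadiusAt_lt
    (hX : UniformlyConvexMetric X) [F.NeBot] (hF : asymptoticRadius F ≠ ⊤) {ε : ℝ} (hε : 0 < ε) :
    ∃ t > asymptoticRadius F, ∀ a b, asymptoticRadiusAt F a < t → asymptoticRadiusAt F b < t →
      dist a b < ε := by
  obtain ⟨r, hr, hrF⟩ : ∃ r : ℝ, 0 ≤ r ∧ asymptoticRadius F = ENNReal.ofReal r :=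
    ⟨_, ENNReal.toReal_nonneg, (ENNReal.ofReal_toReal hF).symm⟩
  rw [hrF]
  rcases hr.eq_or_lt with rfl | hr
  · refine ⟨ENNReal.ofReal (ε / 2), by simpa using hε, fun a b ha hb => ?_⟩
    obtain ⟨z, hza, hzb⟩ := ((eventually_dist_lt_of_asymptoticRadiusAt_lt ha).and
      (eventually_dist_lt_of_asymptoticRadiusAt_lt hb)).exists
    linarith [dist_triangle_left a b z]
  · obtain ⟨s, hsr, t, hrt, hst⟩ := hX hr hε
    refine ⟨ENNReal.ofReal t, (ENNReal.ofReal_lt_ofReal_iff (hr.trans hrt)).2 hrt,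
      fun a b ha hb => lt_of_not_ge fun hab => ?_⟩
    obtain ⟨m, hm⟩ := hst a b hab
    have hms : ∀ᶠ z in F, dist z m ≤ s := by
      filter_upwards [eventually_dist_lt_of_asymptoticRadiusAt_lt ha,
        eventually_dist_lt_of_asymptoticRadiusAt_lt hb] with z using hm z
    have hlt : asymptoticRadius F < asymptoticRadius F :=
      calc asymptoticRadius F ≤ asymptoticRadiusAt F m := iInf_le _ m
        _ ≤ ENNReal.ofReal s := by
          refine limsup_le_of_le (h := hms.mono fun z hz => ?_)
          rw [edist_comm, edist_dist]
          exact ENNReal.ofReal_le_ofReal hz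
        _ < ENNReal.ofReal r := (ENNReal.ofReal_lt_ofReal_iff hr).2 hsr
        _ = asymptoticRadius F := hrF.symm
    exact hlt.false

theorem UniformlyConvexMetric.exists_asymptoticRadiusAt_le [CompleteSpace X]
    (hX : UniformlyConvexMetric X) (F : Filter X) [F.NeBot] :
    ∃ c, ∀ y, asymptoticRadiusAt F c ≤ asymptoticRadiusAt F y := by
  have : Nonempty X := F.nonempty_of_neBot
  by_cases hF : asymptoticRadius F = ⊤
  · have htop (y : X) : asymptoticRadiusAt F y = ⊤ := iInf_eq_top.1 hF y
    exact ⟨Classical.arbitrary X, fun y => (htop y).symm ▸ le_top⟩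
  · exact exists_forall_le_of_forall_exists_dist_lt
      (continuous_asymptoticRadiusAt F).lowerSemicontinuous
      fun ε hε => hX.exists_dist_lt_of_asymptoticRadiusAt_lt hF hε

end UniformlyConvex

section Sequences

variable {H : Type*} [MetricSpace H]

theorem isAsymptoticCenter_iff {x : ℕ → H} (hx : Bornology.IsBounded (Set.range x)) {c : H} :
    IsAsymptoticCenter x c ↔
      ∀ y, asymptoticRadiusAt (map x atTop) c ≤ asymptoticRadiusAt (map x atTop) y := by
  refine forall_congr' fun y => ?_
  have hlimsup (z : H) : limsup (fun n => dist z (x n) ^ 2) atTop =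
      (asymptoticRadiusAt (map x atTop) z).toReal ^ 2 :=
    limsup_dist_sq_eq_toReal_sq hx range_mem_map z
  have hne_top := asymptoticRadiusAt_ne_top hx (range_mem_map (f := atTop))
  rw [hlimsup, hlimsup, pow_le_pow_iff_left₀ ENNReal.toReal_nonneg ENNReal.toReal_nonneg
    two_ne_zero, ENNReal.toReal_le_toReal (hne_top c) (hne_top y)]

theorem bounded_seq_has_weakly_convergent_subseq_general [CompleteSpace H]
    (hH : UniformlyConvexMetric H) {x : ℕ → H} (hx : Bornology.IsBounded (Set.range x)) :
    ∃ φ : ℕ → ℕ, StrictMono φ ∧ ∃ c : H, WeakConvSeq (x ∘ φ) c := by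
  obtain ⟨φ, hφ, hreg⟩ := exists_strictMono_forall_map_comp_eq
    (r := fun F => asymptoticRadius (map x F)) (asymptoticRadius_mono.comp (map_mono (m := x)))
  obtain ⟨c, hc⟩ := hH.exists_asymptoticRadiusAt_le (map x (map φ atTop))
  refine ⟨φ, hφ, c, fun ψ hψ => ?_⟩
  have hbdd : Bornology.IsBounded (Set.range (x ∘ φ ∘ ψ)) :=
    hx.subset (Set.range_comp_subset_range _ x)
  refine (isAsymptoticCenter_iff hbdd).2 fun y => ?_
  have hle : map (φ ∘ ψ) atTop ≤ map φ atTop := by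
    rw [← Filter.map_map]
    exact map_mono hψ.tendsto_atTop
  calc asymptoticRadiusAt (map x (map (φ ∘ ψ) atTop)) c
      ≤ asymptoticRadiusAt (map x (map φ atTop)) c := asymptoticRadiusAt_mono (map_mono hle) c
    _ ≤ asymptoticRadius (map x (map φ atTop)) := le_iInf hc
    _ = asymptoticRadius (map x (map (φ ∘ ψ) atTop)) := (hreg ψ hψ).symm
    _ ≤ asymptoticRadiusAt (map x (map (φ ∘ ψ) atTop)) y := iInf_le _ y

end Sequences

section Hadamard

variable {H : Type*} [MetricSpace H] [CompleteSpace H]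

theorem HadamardSpace.exists_midpoint (hH : HadamardSpace H) (a b : H) :
    ∃ m, ∀ y, dist y m ^ 2 ≤ (dist y a ^ 2 + dist y b ^ 2) / 2 - dist a b ^ 2 / 4 := by
  obtain ⟨γ, hγ, rfl, rfl⟩ := hH.geodesic a b
  refine ⟨γ (1 / 2), fun y => ?_⟩
  linarith [hH.cat0 y γ hγ (1 / 2) (by norm_num)]

theorem HadamardSpace.uniformlyConvexMetric (hH : HadamardSpace H) : UniformlyConvexMetric H := by
  intro r ε hr hε
  have hε2 : 0 < ε ^ 2 := by positivity
  refine ⟨√(r ^ 2 - ε ^ 2 / 8), (Real.sqrt_lt' hr).2 (by linarith),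
    √(r ^ 2 + ε ^ 2 / 8), Real.lt_sqrt_of_sq_lt (by linarith), fun a b hab => ?_⟩
  obtain ⟨m, hm⟩ := hH.exists_midpoint a b
  refine ⟨m, fun y hya hyb => Real.le_sqrt_of_sq_le ?_⟩
  rw [Real.lt_sqrt dist_nonneg] at hya hyb
  have hab2 : ε ^ 2 ≤ dist a b ^ 2 := by gcongr
  linarith [hm y]

end Hadamard

/-- In a Hadamard space, every bounded sequence has a weakly convergent
subsequence (i.e. a weak cluster point). -/
theorem bounded_seq_has_weakly_convergent_subseq
    {H : Type*} [MetricSpace H] [CompleteSpace H] (hH : HadamardSpace H)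
    (x : ℕ → H) (hx : Bornology.IsBounded (Set.range x)) :
    ∃ φ : ℕ → ℕ, StrictMono φ ∧ ∃ c : H, WeakConvSeq (x ∘ φ) c := by
  exact bounded_seq_has_weakly_convergent_subseq_general hH.uniformlyConvexMetric hx
end

section
/- Let (H,d) be a Hadamard space, (x_n) ⊂ H a bounded sequence, and x ∈ H. The following are equivalent: (1) (x_n) weakly converges to x; (2) for every geodesic γ:[0,1]→H passing through x, d(x, P_γ(x_n)) → 0 as n → ∞, where P_γ is the metric projection onto the image of γ; (3) for every y ∈ H, d(x, P_{[x,y]}(x_n)) → 0 as n → ∞, where P_{[x,y]} is the metric projection onto the geodesic segment [x,y]. -/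
open Filter Topology
open scoped Classical

/-!
For a convex set `C`, the CAT(0) inequality gives the Pythagorean inequality
`d(x, P_C x)² + d(P_C x, y)² ≤ d(x, y)²` for `y ∈ C`. If `P_C xₙ → q`, then passing to the `limsup`
yields `limsup d(q, xₙ)² + d(q, y)² ≤ limsup d(y, xₙ)²`. When `y` is the asymptotic center, this
forces `q = y`, so by compactness of `C` the projections converge to the weak limit. Conversely,
when `q = c` for the segment `C = [c, y]`, with `y` arbitrary, it says that `c` is the asymptotic
center.
-/

section Limsup

variable {ι : Type*} {l : Filter ι}

theorem limsup_le_limsup_add_of_tendsto [l.NeBot] {u v e : ι → ℝ} {k : ℝ}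
    (hu : l.IsBoundedUnder (· ≥ ·) u) (hv : l.IsBoundedUnder (· ≤ ·) v)
    (hv' : l.IsBoundedUnder (· ≥ ·) v) (he : Tendsto e l (𝓝 k)) (h : ∀ᶠ i in l, u i ≤ v i + e i) :
    limsup u l ≤ limsup v l + k :=
  calc limsup u l ≤ limsup (v + e) l :=
        limsup_le_limsup h hu.isCoboundedUnder_le (isBoundedUnder_le_add hv he.isBoundedUnder_le)
    _ ≤ limsup v l + limsup e l :=
        limsup_add_le hv' hv he.isCoboundedUnder_le he.isBoundedUnder_le
    _ = limsup v l + k := by rw [he.limsup_eq]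

variable {X : Type*} [PseudoMetricSpace X] {x p : ι → X} {q : X}

theorem isBoundedUnder_le_dist_of_isBounded_range (hx : Bornology.IsBounded (Set.range x)) (y : X) :
    l.IsBoundedUnder (· ≤ ·) fun i => dist y (x i) := by
  obtain ⟨M, hM⟩ := hx.subset_closedBall y
  exact isBoundedUnder_of ⟨M, fun i => Metric.mem_closedBall'.1 (hM (Set.mem_range_self i))⟩

theorem limsup_dist_sq_le_limsup_dist_sq_add [l.NeBot] (hx : Bornology.IsBounded (Set.range x))
    {y z : X} {e : ι → ℝ} {k : ℝ} (he : Tendsto e l (𝓝 k))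
    (h : ∀ᶠ i in l, dist y (x i) ^ 2 ≤ dist z (x i) ^ 2 + e i) :
    limsup (fun i => dist y (x i) ^ 2) l ≤ limsup (fun i => dist z (x i) ^ 2) l + k := by
  have bddBelow (w : X) : l.IsBoundedUnder (· ≥ ·) fun i => dist w (x i) ^ 2 :=
    isBoundedUnder_of ⟨0, fun _ => sq_nonneg _⟩
  obtain ⟨M, hM⟩ := isBoundedUnder_le_dist_of_isBounded_range (l := l) hx z
  have bddAbove : l.IsBoundedUnder (· ≤ ·) fun i => dist z (x i) ^ 2 :=
    ⟨M ^ 2, (eventually_map.1 hM).mono fun _ hi => pow_le_pow_left₀ dist_nonneg hi 2⟩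
  exact limsup_le_limsup_add_of_tendsto (bddBelow y) bddAbove (bddBelow z) he h

theorem tendsto_dist_sq_sub_dist_sq (hx : Bornology.IsBounded (Set.range x))
    (hp : Tendsto p l (𝓝 q)) :
    Tendsto (fun i => dist q (x i) ^ 2 - dist (p i) (x i) ^ 2) l (𝓝 0) := by
  have hdist : Tendsto (fun i => dist (p i) q) l (𝓝 0) := tendsto_iff_dist_tendsto_zero.1 hp
  have hsub : Tendsto (fun i => dist q (x i) - dist (p i) (x i)) l (𝓝 0) :=
    squeeze_zero_norm (fun i => (abs_dist_sub_le q (p i) (x i)).trans_eq (dist_comm _ _)) hdist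
  have hbdd : l.IsBoundedUnder (· ≤ ·) fun i => ‖dist q (x i)‖ := by
    simpa only [Real.norm_eq_abs, abs_dist] using isBoundedUnder_le_dist_of_isBounded_range hx q
  -- `a² - b² = 2 (a - b) a - (a - b)²` with `a = d(q, xᵢ)`, `b = d(pᵢ, xᵢ)`
  have hlim := ((hsub.zero_mul_isBoundedUnder_le hbdd).const_mul 2).sub (hsub.mul hsub)
  simp only [mul_zero, sub_zero] at hlim
  exact hlim.congr fun i => by ring

end Limsup

namespace IsGeodesic

variable {H : Type*} [MetricSpace H] {γ : ℝ → H}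

theorem continuousOn (hγ : IsGeodesic γ) : ContinuousOn γ (Set.Icc 0 1) := by
  refine (LipschitzOnWith.of_dist_le_mul (K := nndist (γ 0) (γ 1)) fun s hs t ht => ?_).continuousOn
  rw [hγ s hs t ht, Real.dist_eq, coe_nndist, mul_comm]

theorem isCompact_image (hγ : IsGeodesic γ) : IsCompact (γ '' Set.Icc 0 1) :=
  isCompact_Icc.image_of_continuousOn hγ.continuousOn

theorem comp_lineMap (hγ : IsGeodesic γ) {a b : ℝ} (ha : a ∈ Set.Icc (0 : ℝ) 1)
    (hb : b ∈ Set.Icc (0 : ℝ) 1) : IsGeodesic (γ ∘ AffineMap.lineMap a b) := by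
  have lineMap_mem {u : ℝ} (hu : u ∈ Set.Icc (0 : ℝ) 1) :
      AffineMap.lineMap a b u ∈ Set.Icc (0 : ℝ) 1 := (convex_Icc 0 1).lineMap_mem ha hb hu
  intro s hs t ht
  simp only [Function.comp_apply, AffineMap.lineMap_apply_zero, AffineMap.lineMap_apply_one,
    hγ _ (lineMap_mem hs) _ (lineMap_mem ht), hγ a ha b hb, ← Real.dist_eq,
    dist_lineMap_lineMap, mul_assoc]

end IsGeodesic

theorem exists_isProjPt_of_isCompact {H : Type*} [MetricSpace H] {C : Set H} (hC : IsCompact C)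
    (hne : C.Nonempty) (x : H) : ∃ p, IsProjPt C x p :=
  hC.exists_isMinOn hne (continuous_const.dist continuous_id).continuousOn

/-- A CAT(0) space: a geodesic metric space satisfying the CAT(0) inequality. It differs from
`HadamardSpace` only in that completeness is not required. -/
structure CAT0Space (H : Type*) [MetricSpace H] : Prop where
  geodesic : ∀ x y : H, ∃ γ : ℝ → H, IsGeodesic γ ∧ γ 0 = x ∧ γ 1 = y
  cat0 : ∀ (x : H) (γ : ℝ → H), IsGeodesic γ → ∀ t ∈ Set.Icc (0 : ℝ) 1,
    dist x (γ t) ^ 2 ≤ (1 - t) * dist x (γ 0) ^ 2 + t * dist x (γ 1) ^ 2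
      - t * (1 - t) * dist (γ 0) (γ 1) ^ 2

theorem HadamardSpace.cat0Space {H : Type*} [MetricSpace H] [CompleteSpace H]
    (hH : HadamardSpace H) : CAT0Space H :=
  ⟨hH.geodesic, hH.cat0⟩

section CAT0

variable {H : Type*} [MetricSpace H]

namespace CAT0Space

theorem eqOn_of_isGeodesic (hH : CAT0Space H) {γ σ : ℝ → H} (hγ : IsGeodesic γ)
    (hσ : IsGeodesic σ) (h0 : σ 0 = γ 0) (h1 : σ 1 = γ 1) : Set.EqOn σ γ (Set.Icc 0 1) := by
  intro t ht
  have hdist0 : dist (σ t) (γ 0) = t * dist (γ 0) (γ 1) := by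
    rw [← h0, ← h1, hσ t ht 0 (by simp), sub_zero, abs_of_nonneg ht.1]
  have hdist1 : dist (σ t) (γ 1) = (1 - t) * dist (γ 0) (γ 1) := by
    rw [← h0, ← h1, hσ t ht 1 (by simp), abs_sub_comm, abs_of_nonneg (sub_nonneg.2 ht.2)]
  have hsq : dist (σ t) (γ t) ^ 2 ≤ 0 := by
    refine (hH.cat0 (σ t) γ hγ t ht).trans_eq ?_
    rw [hdist0, hdist1]
    ring
  exact dist_eq_zero.1 ((sq_nonpos_iff _).1 hsq)

theorem geodesicConvex_image (hH : CAT0Space H) {γ : ℝ → H} (hγ : IsGeodesic γ) :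
    GeodesicConvex (γ '' Set.Icc (0 : ℝ) 1) := by
  rintro σ hσ ⟨a, ha, h0⟩ ⟨b, hb, h1⟩ t ht
  refine ⟨AffineMap.lineMap a b t, (convex_Icc 0 1).lineMap_mem ha hb ht, ?_⟩
  exact (hH.eqOn_of_isGeodesic (hγ.comp_lineMap ha hb) hσ (by simp [h0]) (by simp [h1]) ht).symm

theorem dist_sq_add_dist_sq_le_of_isProjPt (hH : CAT0Space H) {C : Set H} (hC : GeodesicConvex C)
    {x p y : H} (hp : IsProjPt C x p) (hy : y ∈ C) :
    dist x p ^ 2 + dist p y ^ 2 ≤ dist x y ^ 2 := by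
  obtain ⟨γ, hγ, rfl, rfl⟩ := hH.geodesic p y
  -- Comparing `p = γ 0` with the competitor `γ t` gives this after division by `t`.
  have hpos : ∀ t ∈ Set.Ioc (0 : ℝ) 1,
      dist x (γ 0) ^ 2 + (1 - t) * dist (γ 0) (γ 1) ^ 2 ≤ dist x (γ 1) ^ 2 := by
    intro t ht
    have htIcc : t ∈ Set.Icc (0 : ℝ) 1 := ⟨ht.1.le, ht.2⟩
    have hmin : dist x (γ 0) ^ 2 ≤ dist x (γ t) ^ 2 :=
      pow_le_pow_left₀ dist_nonneg (hp.2 _ (hC γ hγ hp.1 hy t htIcc)) 2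
    refine le_of_mul_le_mul_left ?_ ht.1
    linarith [hH.cat0 x γ hγ t htIcc]
  have hlim : Tendsto (fun t : ℝ => dist x (γ 0) ^ 2 + (1 - t) * dist (γ 0) (γ 1) ^ 2) (𝓝[>] 0)
      (𝓝 (dist x (γ 0) ^ 2 + dist (γ 0) (γ 1) ^ 2)) :=
    (Continuous.tendsto' (by fun_prop) 0 _ (by ring)).mono_left nhdsWithin_le_nhds
  exact le_of_tendsto hlim (mem_of_superset (Ioc_mem_nhdsGT one_pos) hpos)

end CAT0Space

theorem limsup_dist_sq_add_le_of_tendsto_isProjPt {ι : Type*} {l : Filter ι} [l.NeBot]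
    (hH : CAT0Space H) {x p : ι → H} (hx : Bornology.IsBounded (Set.range x)) {C : Set H}
    (hC : GeodesicConvex C) (hp : ∀ i, IsProjPt C (x i) (p i)) {q y : H} (hpq : Tendsto p l (𝓝 q))
    (hy : y ∈ C) :
    limsup (fun i => dist q (x i) ^ 2) l + dist q y ^ 2 ≤ limsup (fun i => dist y (x i) ^ 2) l := by
  have herr : Tendsto (fun i => dist q (x i) ^ 2 - dist (p i) (x i) ^ 2 - dist (p i) y ^ 2) l
      (𝓝 (0 - dist q y ^ 2)) :=
    (tendsto_dist_sq_sub_dist_sq hx hpq).sub ((hpq.dist tendsto_const_nhds).pow 2)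
  have hle := limsup_dist_sq_le_limsup_dist_sq_add hx (y := q) (z := y) herr <|
    Eventually.of_forall fun i => by
      have hpyth := hH.dist_sq_add_dist_sq_le_of_isProjPt hC (hp i) hy
      rw [dist_comm (x i), dist_comm (x i)] at hpyth
      linarith
  linarith

theorem IsAsymptoticCenter.eq_of_tendsto_isProjPt (hH : CAT0Space H) {x p : ℕ → H}
    (hx : Bornology.IsBounded (Set.range x)) {c : H} (hc : IsAsymptoticCenter x c) {C : Set H}
    (hC : GeodesicConvex C) (hcC : c ∈ C) (hp : ∀ n, IsProjPt C (x n) (p n)) {q : H}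
    (hpq : Tendsto p atTop (𝓝 q)) : q = c := by
  have hle := limsup_dist_sq_add_le_of_tendsto_isProjPt hH hx hC hp hpq hcC
  have hsq : dist q c ^ 2 ≤ 0 := by linarith [hc q]
  exact dist_eq_zero.1 ((sq_nonpos_iff _).1 hsq)

theorem WeakConvSeq.tendsto_isProjPt (hH : CAT0Space H) {x p : ℕ → H}
    (hx : Bornology.IsBounded (Set.range x)) {c : H} (hw : WeakConvSeq x c) {C : Set H}
    (hC : GeodesicConvex C) (hK : IsCompact C) (hcC : c ∈ C) (hp : ∀ n, IsProjPt C (x n) (p n)) :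
    Tendsto p atTop (𝓝 c) := by
  refine hK.tendsto_nhds_of_unique_mapClusterPt (.of_forall fun n => (hp n).1) fun q _ hq => ?_
  obtain ⟨φ, hφ, hφq⟩ := hq.tendsto_subseq
  exact (hw φ hφ).eq_of_tendsto_isProjPt hH (hx.subset (Set.range_comp_subset_range _ _)) hC hcC
    (fun n => hp (φ n)) hφq

theorem weakConvSeq_of_tendsto_isProjPt (hH : CAT0Space H) {x : ℕ → H}
    (hx : Bornology.IsBounded (Set.range x)) {c : H}
    (h : ∀ y : H, ∃ C : Set H, GeodesicConvex C ∧ y ∈ C ∧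
      ∃ p : ℕ → H, (∀ n, IsProjPt C (x n) (p n)) ∧ Tendsto p atTop (𝓝 c)) :
    WeakConvSeq x c := by
  intro φ hφ y
  obtain ⟨C, hC, hy, p, hp, hpc⟩ := h y
  have hle := limsup_dist_sq_add_le_of_tendsto_isProjPt hH
    (hx.subset (Set.range_comp_subset_range φ x)) hC (fun n => hp (φ n))
    (hpc.comp hφ.tendsto_atTop) hy
  exact (le_add_of_nonneg_right (sq_nonneg _)).trans hle

theorem weak_convergence_iff_projections_general (hH : CAT0Space H) {xs : ℕ → H}
    (hxs : Bornology.IsBounded (Set.range xs)) (c : H) :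
    List.TFAE [WeakConvSeq xs c,
      ∀ γ : ℝ → H, IsGeodesic γ → (∃ t ∈ Set.Icc (0:ℝ) 1, γ t = c) →
        ∀ p : ℕ → H, (∀ n, IsProjPt (γ '' Set.Icc (0:ℝ) 1) (xs n) (p n)) →
          Tendsto (fun n => dist c (p n)) atTop (𝓝 0),
      ∀ y : H, ∀ γ : ℝ → H, IsGeodesic γ → γ 0 = c → γ 1 = y →
        ∀ p : ℕ → H, (∀ n, IsProjPt (γ '' Set.Icc (0:ℝ) 1) (xs n) (p n)) →
          Tendsto (fun n => dist c (p n)) atTop (𝓝 0)] := by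
  simp only [dist_comm c, ← tendsto_iff_dist_tendsto_zero]
  tfae_have 1 → 2 := fun hw γ hγ hc p hp =>
    hw.tendsto_isProjPt hH hxs (hH.geodesicConvex_image hγ) hγ.isCompact_image hc hp
  tfae_have 2 → 3 := fun h _ γ hγ h0 _ => h γ hγ ⟨0, by simp, h0⟩
  tfae_have 3 → 1 := by
    refine fun h => weakConvSeq_of_tendsto_isProjPt hH hxs fun y => ?_
    obtain ⟨γ, hγ, h0, h1⟩ := hH.geodesic c y
    have hy : y ∈ γ '' Set.Icc (0 : ℝ) 1 := ⟨1, by simp, h1⟩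
    choose p hp using fun n => exists_isProjPt_of_isCompact hγ.isCompact_image ⟨y, hy⟩ (xs n)
    exact ⟨_, hH.geodesicConvex_image hγ, hy, p, hp, h y γ hγ h0 h1 p hp⟩
  tfae_finish

end CAT0

/-- Characterization of weak convergence of a bounded sequence `xs` to `c` in
a Hadamard space: `(1)` weak convergence is equivalent to `(2)` convergence to `c` of the
projections onto (the image of) any geodesic through `c`, and to `(3)` convergence to `c` of
the projections onto any geodesic segment `[c,y]`. -/
theorem weak_convergence_iff_projections
    {H : Type*} [MetricSpace H] [CompleteSpace H] (hH : HadamardSpace H)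
    (xs : ℕ → H) (hxs : Bornology.IsBounded (Set.range xs)) (c : H) :
    (WeakConvSeq xs c ↔
      (∀ γ : ℝ → H, IsGeodesic γ → (∃ t ∈ Set.Icc (0:ℝ) 1, γ t = c) →
        ∀ p : ℕ → H, (∀ n, IsProjPt (γ '' Set.Icc (0:ℝ) 1) (xs n) (p n)) →
          Tendsto (fun n => dist c (p n)) atTop (𝓝 0))) ∧
    (WeakConvSeq xs c ↔
      (∀ y : H, ∀ γ : ℝ → H, IsGeodesic γ → γ 0 = c → γ 1 = y →
        ∀ p : ℕ → H, (∀ n, IsProjPt (γ '' Set.Icc (0:ℝ) 1) (xs n) (p n)) →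
          Tendsto (fun n => dist c (p n)) atTop (𝓝 0))) := by
  have tfae := weak_convergence_iff_projections_general hH.cat0Space hxs c
  exact ⟨tfae.out 0 1, tfae.out 0 2⟩
end

section
/- Every Hadamard space (H,d) has the Opial property: if a bounded sequence (x_n) ⊂ H weakly converges to x ∈ H, then liminf_{n→∞} d(x_n,x) < liminf_{n→∞} d(x_n,z) for every z ∈ H with z ≠ x. -/
open Filter Topology
open scoped Classical

/-!
The CN inequality at the midpoint `m` of `c` and `z` survives taking the upper limit along any
bounded sequence. If `c` minimizes `ω = limsup d(·, y_n)²`, comparing `ω c` with `ω m` therefore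
gives `ω c + d(c, z)² / 2 ≤ ω z`. Apply this along a subsequence `y` of `x` on which `d(z, ·)`
converges to `liminf d(z, x_n)`: eventually `y`, hence infinitely many terms of `x`, stay within
some distance of `c` strictly smaller than that lower limit.
-/

/-- `m` is a midpoint of `a` and `b` in the sense of Bruhat and Tits: it satisfies the CN
inequality, which is the CAT(0) inequality at `t = 1 / 2`. That `m` lies at distance `d(a, b) / 2`
from both points is not required separately, since the cases `y = a` and `y = b` force it. -/
def IsCNMidpoint {H : Type*} [PseudoMetricSpace H] (a b m : H) : Prop :=
  ∀ y : H, dist m y ^ 2 ≤ dist a y ^ 2 / 2 + dist b y ^ 2 / 2 - dist a b ^ 2 / 4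

theorem HadamardSpace.exists_isCNMidpoint {H : Type*} [MetricSpace H] [CompleteSpace H]
    (hH : HadamardSpace H) (a b : H) : ∃ m, IsCNMidpoint a b m := by
  obtain ⟨γ, hγ, rfl, rfl⟩ := hH.geodesic a b
  refine ⟨γ (1 / 2), fun y => ?_⟩
  have hcat := hH.cat0 y γ hγ (1 / 2) ⟨by norm_num, by norm_num⟩
  simp only [dist_comm y] at hcat
  linarith

section Limsup

variable {H ι : Type*} [PseudoMetricSpace H] {l : Filter ι} {u : ι → H}

theorem isBoundedUnder_ge_dist (a : H) : l.IsBoundedUnder (· ≥ ·) fun i => dist a (u i) :=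
  isBoundedUnder_of ⟨0, fun _ => dist_nonneg⟩

theorem isBoundedUnder_le_dist (hu : Bornology.IsBounded (Set.range u)) (a : H) :
    l.IsBoundedUnder (· ≤ ·) fun i => dist a (u i) := by
  obtain ⟨R, hR⟩ := hu.subset_closedBall a
  exact isBoundedUnder_of ⟨R, fun i => Metric.mem_closedBall'.1 (hR ⟨i, rfl⟩)⟩

theorem isBoundedUnder_le_dist_sq (hu : Bornology.IsBounded (Set.range u)) (a : H) :
    l.IsBoundedUnder (· ≤ ·) fun i => dist a (u i) ^ 2 := by
  obtain ⟨R, hR⟩ := (isBoundedUnder_le_dist hu a).eventually_le (f := l)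
  exact isBoundedUnder_of_eventually_le (hR.mono fun i hi => pow_le_pow_left₀ dist_nonneg hi 2)

theorem IsCNMidpoint.limsup_dist_sq_le [l.NeBot] {a b m : H} (hm : IsCNMidpoint a b m)
    (hu : Bornology.IsBounded (Set.range u)) :
    limsup (fun i => dist m (u i) ^ 2) l ≤
      limsup (fun i => dist a (u i) ^ 2) l / 2 + limsup (fun i => dist b (u i) ^ 2) l / 2
        - dist a b ^ 2 / 4 := by
  have hcobdd : l.IsCoboundedUnder (· ≤ ·) fun i => dist m (u i) ^ 2 :=
    (isBoundedUnder_of ⟨0, fun _ => sq_nonneg _⟩ :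
      l.IsBoundedUnder (· ≥ ·) _).isCoboundedUnder_le
  refine le_of_forall_pos_le_add fun ε hε => limsup_le_of_le hcobdd ?_
  filter_upwards
    [eventually_lt_of_limsup_lt (lt_add_of_pos_right _ hε) (isBoundedUnder_le_dist_sq hu a),
      eventually_lt_of_limsup_lt (lt_add_of_pos_right _ hε) (isBoundedUnder_le_dist_sq hu b)]
    with i hai hbi
  linarith [hm (u i)]

end Limsup

theorem IsAsymptoticCenter.limsup_dist_sq_add_le {H : Type*} [MetricSpace H] {y : ℕ → H}
    {c z m : H} (hc : IsAsymptoticCenter y c) (hy : Bornology.IsBounded (Set.range y))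
    (hm : IsCNMidpoint c z m) :
    limsup (fun n => dist c (y n) ^ 2) atTop + dist c z ^ 2 / 2 ≤
      limsup (fun n => dist z (y n) ^ 2) atTop := by
  linarith [hc m, hm.limsup_dist_sq_le (l := atTop) hy]

theorem liminf_lt_of_limsup_sq_comp_lt {α β : Type*} {l : Filter α} {k : Filter β} [k.NeBot]
    {u : α → ℝ} {φ : β → α} {r : ℝ} (hφ : Tendsto φ k l) (hu : l.IsBoundedUnder (· ≥ ·) u)
    (hsq : k.IsBoundedUnder (· ≤ ·) fun i => u (φ i) ^ 2) (hr : 0 ≤ r)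
    (h : limsup (fun i => u (φ i) ^ 2) k < r ^ 2) : liminf u l < r := by
  obtain ⟨q, hlq, hqr⟩ := exists_between h
  have hlt : ∀ᶠ i in k, u (φ i) ^ 2 < q := eventually_lt_of_limsup_lt hlq hsq
  have hle : ∀ᶠ i in k, u (φ i) ≤ √q := hlt.mono fun i hi => Real.le_sqrt_of_sq_le hi.le
  have hq : 0 ≤ q := hlt.exists.elim fun i hi => (sq_nonneg (u (φ i))).trans hi.le
  calc liminf u l ≤ √q := liminf_le_of_frequently_le (hφ.frequently hle.frequently) hu
    _ < r := (Real.sqrt_lt hq hr).2 hqr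

theorem hadamard_opial_property_general {H : Type*} [MetricSpace H] {x : ℕ → H}
    (hx : Bornology.IsBounded (Set.range x)) {c z m : H} (hconv : WeakConvSeq x c)
    (hm : IsCNMidpoint c z m) (hz : z ≠ c) :
    liminf (fun n => dist (x n) c) atTop < liminf (fun n => dist (x n) z) atTop := by
  simp only [dist_comm (x _)]
  set L := liminf (fun n => dist z (x n)) atTop
  have hcluster : MapClusterPt L atTop fun n => dist z (x n) :=
    .liminf (isBoundedUnder_le_dist hx z).isCoboundedUnder_ge (isBoundedUnder_ge_dist z)
  obtain ⟨φ, hφ, hlim⟩ := hcluster.tendsto_subseq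
  have hxφ : Bornology.IsBounded (Set.range (x ∘ φ)) := hx.subset (Set.range_comp_subset_range φ x)
  have hωz : limsup (fun n => dist z ((x ∘ φ) n) ^ 2) atTop = L ^ 2 := (hlim.pow 2).limsup_eq
  have hωc : limsup (fun n => dist c ((x ∘ φ) n) ^ 2) atTop < L ^ 2 := by
    have hgap : 0 < dist c z ^ 2 := pow_pos (dist_pos.2 hz.symm) 2
    linarith [(hconv φ hφ).limsup_dist_sq_add_le hxφ hm]
  have hL : 0 ≤ L := ge_of_tendsto' hlim fun _ => dist_nonneg
  exact liminf_lt_of_limsup_sq_comp_lt hφ.tendsto_atTop (isBoundedUnder_ge_dist c)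
    (isBoundedUnder_le_dist_sq hxφ c) hL hωc

/-- Every Hadamard space has the Opial property: if a bounded sequence
weakly converges to `x`, then `liminf d(x_n,x) < liminf d(x_n,z)` for every `z ≠ x`. -/
theorem hadamard_opial_property
    {H : Type*} [MetricSpace H] [CompleteSpace H] (hH : HadamardSpace H)
    (x : ℕ → H) (hx : Bornology.IsBounded (Set.range x)) (c : H)
    (hconv : WeakConvSeq x c) (z : H) (hz : z ≠ c) :
    liminf (fun n => dist (x n) c) atTop < liminf (fun n => dist (x n) z) atTop := by
  obtain ⟨m, hm⟩ := hH.exists_isCNMidpoint c z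
  exact hadamard_opial_property_general hx hconv hm hz
end
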